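/- arXiv:1809.04888 — 2 statements merged into one kernel-verified Lean document; each statement's English description precedes it below -/
import Mathlib

section
/- Let A be a subset of the prime numbers whose natural density in the primes exists and equals θ ∈ (0,1]. Then the limit as N → ∞ of the ratio (∑_{n ≥ 1 : every prime factor of n is ≤ N and lies in A} 1/n) / (∑_{1 ≤ n ≤ N : every prime factor of n lies in A} 1/n) equals e^{γθ} · Γ(θ+1). -/
open Filter
open scoped Classical

/-- The sum of `1/n` over positive integers `n` all of whose prime factors lie in the
set described by the predicate `P`. -/
noncomputable def harmSum (P : ℕ → Prop) : ℝ :=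
  ∑' n : {n : ℕ // 0 < n ∧ ∀ p : ℕ, p.Prime → p ∣ n → P p}, (1 : ℝ) / ((n : ℕ) : ℝ)

theorem exists_abs_sum_vonMangoldt_div_sub_log_le :
    ∃ C : ℝ, ∀ N : ℕ, 1 ≤ N →
      |∑ d ∈ Finset.Ioc 0 N, ArithmeticFunction.vonMangoldt d / d - Real.log N| ≤ C := by
  refine ⟨Real.log 4 + 5, fun N hN => ?_⟩
  have hN' : (0 : ℝ) < N := by exact_mod_cast hN
  have hlog4 : 0 ≤ Real.log 4 := Real.log_nonneg (by norm_num)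
  have hfact : ∑ n ∈ Finset.Ioc 0 N, Real.log n = Real.log (Nat.factorial N) := by
    clear hN hN'
    induction N with
    | zero => simp
    | succ k ih =>
      rw [← Finset.insert_Ioc_right_eq_Ioc_add_one (Nat.zero_le k),
        Finset.sum_insert (by simp), ih, Nat.factorial_succ]
      push_cast
      rw [Real.log_mul (by positivity) (by positivity)]
  have hsum : Real.log (Nat.factorial N) =
      ∑ d ∈ Finset.Ioc 0 N, ArithmeticFunction.vonMangoldt d * ((N / d : ℕ) : ℝ) := by
    rw [← hfact, ← ArithmeticFunction.sum_Ioc_mul_zeta_eq_sum]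
    refine Finset.sum_congr rfl fun n _ => ?_
    rw [ArithmeticFunction.vonMangoldt_mul_zeta, ArithmeticFunction.log_apply]
  have hlow : N * Real.log N - N ≤ Real.log (Nat.factorial N) := by
    have h1 := Stirling.le_log_factorial_stirling (n := N) (by omega)
    have h2 : 0 ≤ Real.log N := Real.log_natCast_nonneg N
    have h3 : 0 ≤ Real.log (2 * Real.pi) := Real.log_nonneg (by linarith [Real.pi_gt_three])
    linarith
  have hupp : Real.log (Nat.factorial N) ≤ N * Real.log N := by
    rw [← Real.log_pow]
    exact Real.log_le_log (by positivity) (by exact_mod_cast Nat.factorial_le_pow N)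
  have hpsi : ∑ d ∈ Finset.Ioc 0 N, ArithmeticFunction.vonMangoldt d ≤ (Real.log 4 + 4) * N := by
    have := Chebyshev.psi_le_const_mul_self (x := (N : ℝ)) hN'.le
    simpa [Chebyshev.psi] using this
  set T := ∑ d ∈ Finset.Ioc 0 N, ArithmeticFunction.vonMangoldt d / d with hT
  have h1 : Real.log (Nat.factorial N) ≤ N * T := by
    rw [hsum, hT, Finset.mul_sum]
    refine Finset.sum_le_sum fun d _ => ?_
    have : ((N / d : ℕ) : ℝ) ≤ N / d := Nat.cast_div_le
    calc _ ≤ ArithmeticFunction.vonMangoldt d * ((N : ℝ) / d) :=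
          mul_le_mul_of_nonneg_left this ArithmeticFunction.vonMangoldt_nonneg
      _ = _ := by ring
  have h2 : N * T ≤ Real.log (Nat.factorial N) + (Real.log 4 + 4) * N := by
    refine le_trans ?_ (add_le_add_right hpsi _)
    rw [hsum, hT, Finset.mul_sum, ← Finset.sum_add_distrib]
    refine Finset.sum_le_sum fun d _ => ?_
    have : (N : ℝ) / d ≤ ((N / d : ℕ) : ℝ) + 1 := by
      have := Nat.lt_floor_add_one ((N : ℝ) / d)
      rw [Nat.floor_div_eq_div] at this
      exact this.le
    calc _ = ArithmeticFunction.vonMangoldt d * ((N : ℝ) / d) := by ring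
      _ ≤ ArithmeticFunction.vonMangoldt d * (((N / d : ℕ) : ℝ) + 1) :=
          mul_le_mul_of_nonneg_left this ArithmeticFunction.vonMangoldt_nonneg
      _ = _ := by ring
  rw [abs_le]
  constructor
  · have : N * (-1) ≤ N * (T - Real.log N) := by linarith
    have := le_of_mul_le_mul_left this hN'
    linarith
  · have : N * (T - Real.log N) ≤ N * (Real.log 4 + 4) := by linarith
    have := le_of_mul_le_mul_left this hN'
    linarith

/-- Mertens' first theorem. -/
theorem exists_abs_sum_log_prime_div_sub_log_le :
    ∃ C : ℝ, ∀ N : ℕ, 1 ≤ N →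
      |∑ p ∈ Finset.Icc 0 N, (if p.Prime then Real.log p / p else 0) - Real.log N| ≤ C := by
  obtain ⟨C, hC⟩ := exists_abs_sum_vonMangoldt_div_sub_log_le
  have hsum := ArithmeticFunction.vonMangoldt.summable_residueClass_non_primes_div (q := 1) 0
  have hres : ∀ n : ℕ, ArithmeticFunction.vonMangoldt.residueClass (0 : ZMod 1) n =
      ArithmeticFunction.vonMangoldt n := fun n => by
    simp [ArithmeticFunction.vonMangoldt.residueClass, Subsingleton.elim (n : ZMod 1) 0]
  simp only [hres] at hsum
  refine ⟨C + ∑' n : ℕ, (if n.Prime then 0 else ArithmeticFunction.vonMangoldt n) / n,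
    fun N hN => ?_⟩
  have hnn : ∀ n : ℕ, 0 ≤ (if n.Prime then 0 else ArithmeticFunction.vonMangoldt n) / (n : ℝ) :=
    fun n => by split_ifs <;> simp [div_nonneg, ArithmeticFunction.vonMangoldt_nonneg]
  have hle := hsum.sum_le_tsum (Finset.Icc 0 N) (fun n _ => hnn n)
  have h0 := Finset.sum_nonneg fun n (_ : n ∈ Finset.Icc 0 N) => hnn n
  have hsplit : ∑ d ∈ Finset.Ioc 0 N, ArithmeticFunction.vonMangoldt d / d =
      ∑ p ∈ Finset.Icc 0 N, (if p.Prime then Real.log p / p else 0) +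
      ∑ n ∈ Finset.Icc 0 N, (if n.Prime then 0 else ArithmeticFunction.vonMangoldt n) / (n : ℝ) := by
    rw [← Finset.sum_add_distrib, ← Finset.add_sum_Ioc_eq_sum_Icc (Nat.zero_le N)]
    simp only [Nat.not_prime_zero, if_false, CharP.cast_eq_zero, div_zero, add_zero, zero_add]
    refine Finset.sum_congr rfl fun n _ => ?_
    split_ifs with h
    · rw [ArithmeticFunction.vonMangoldt_apply_prime h]; simp
    · simp
  have := hC N hN
  rw [hsplit] at this
  rw [abs_le] at this ⊢
  constructor <;> linarith

/-- The sum of `1/p` over the elements `p ≤ exp x` of `A`. -/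
noncomputable def recipSum (A : Set ℕ) (x : ℝ) : ℝ :=
  ∑ p ∈ Finset.Icc 0 ⌊Real.exp x⌋₊, if p ∈ A then (1 : ℝ) / p else 0

theorem exists_abs_sum_log_prime_div_floor_sub_log_le :
    ∃ C : ℝ, 0 ≤ C ∧ ∀ t : ℝ, 1 ≤ t →
      |∑ p ∈ Finset.Icc 0 ⌊t⌋₊, (if p.Prime then Real.log p / p else 0) - Real.log t| ≤ C := by
  obtain ⟨C, hC⟩ := exists_abs_sum_log_prime_div_sub_log_le
  have hC0 : 0 ≤ C := (abs_nonneg _).trans (hC 1 le_rfl)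
  have hlog2 : 0 ≤ Real.log 2 := Real.log_nonneg (by norm_num)
  refine ⟨C + Real.log 2, by positivity, fun t ht => ?_⟩
  have hfl : 1 ≤ ⌊t⌋₊ := (Nat.one_le_floor_iff _).2 ht
  have hfl' : (1 : ℝ) ≤ ⌊t⌋₊ := by exact_mod_cast hfl
  have h1 := hC _ hfl
  have h2 : Real.log ⌊t⌋₊ ≤ Real.log t :=
    Real.log_le_log (by linarith) (Nat.floor_le (by linarith))
  have h3 : Real.log t ≤ Real.log 2 + Real.log ⌊t⌋₊ := by
    rw [← Real.log_mul (by norm_num) (by linarith)]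
    exact Real.log_le_log (by linarith) (by linarith [Nat.lt_floor_add_one t])
  rw [abs_le] at h1 ⊢
  constructor <;> linarith

theorem recipSum_sub_recipSum (A : Set ℕ) {x y : ℝ} (hxy : x ≤ y) :
    recipSum A y - recipSum A x =
      ∑ p ∈ Finset.Ioc ⌊Real.exp x⌋₊ ⌊Real.exp y⌋₊, if p ∈ A then (1 : ℝ) / p else 0 := by
  have h : ⌊Real.exp x⌋₊ ≤ ⌊Real.exp y⌋₊ := Nat.floor_le_floor (Real.exp_le_exp.2 hxy)
  rw [recipSum, recipSum, sub_eq_iff_eq_add, add_comm, ← Finset.sum_union]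
  · congr 1
    ext n
    simp only [Finset.mem_union, Finset.mem_Icc, Finset.mem_Ioc]
    omega
  · rw [Finset.disjoint_left]
    intro n
    simp only [Finset.mem_Icc, Finset.mem_Ioc]
    omega

/-- A form of Mertens' second theorem. -/
theorem exists_abs_recipSum_primes_sub_sub_log_le :
    ∃ C : ℝ, 0 ≤ C ∧ ∀ x y : ℝ, 0 < x → x ≤ y →
      |recipSum {p | p.Prime} y - recipSum {p | p.Prime} x - Real.log (y / x)| ≤ C / x := by
  obtain ⟨C, hC0, hC⟩ := exists_abs_sum_log_prime_div_floor_sub_log_le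
  refine ⟨2 * C, by positivity, fun x y hx hxy => ?_⟩
  have hy : 0 < y := hx.trans_le hxy
  set c : ℕ → ℝ := fun p => if p.Prime then Real.log p / p else 0 with hc
  set f : ℝ → ℝ := fun t => (Real.log t)⁻¹ with hf
  have hab : Real.exp x ≤ Real.exp y := Real.exp_le_exp.2 hxy
  have hmem : ∀ t ∈ Set.Icc (Real.exp x) (Real.exp y), 1 < t ∧ 0 < Real.log t := fun t ht => by
    have : 1 < t := lt_of_lt_of_le (Real.one_lt_exp_iff.2 hx) ht.1
    exact ⟨this, Real.log_pos this⟩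
  have hderiv : ∀ t ∈ Set.Icc (Real.exp x) (Real.exp y),
      HasDerivAt f (-(t⁻¹) / (Real.log t) ^ 2) t := fun t ht => by
    obtain ⟨h1, h2⟩ := hmem t ht
    exact (Real.hasDerivAt_log (by linarith)).fun_inv h2.ne'
  have hcont : ContinuousOn (fun t : ℝ => -(t⁻¹) / (Real.log t) ^ 2)
      (Set.Icc (Real.exp x) (Real.exp y)) := by
    intro t ht
    obtain ⟨h1, h2⟩ := hmem t ht
    have h3 : t ≠ 0 := by linarith
    have h4 := h2.ne'
    apply ContinuousAt.continuousWithinAt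
    fun_prop (disch := positivity)
  have hdint : MeasureTheory.IntegrableOn (deriv f) (Set.Icc (Real.exp x) (Real.exp y)) :=
    (hcont.integrableOn_Icc).congr_fun (fun t ht => (hderiv t ht).deriv.symm) measurableSet_Icc
  have habel := sum_mul_eq_sub_sub_integral_mul c (Real.exp_pos x).le hab
    (fun t ht => (hderiv t ht).differentiableAt) hdint
  have hprod := integrableOn_mul_sum_Icc c (m := 0) (Real.exp_pos x).le hdint
  have hlhs : ∑ k ∈ Finset.Ioc ⌊Real.exp x⌋₊ ⌊Real.exp y⌋₊, f k * c k =
      recipSum {p | p.Prime} y - recipSum {p | p.Prime} x := by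
    rw [recipSum_sub_recipSum _ hxy]
    refine Finset.sum_congr rfl fun k _ => ?_
    simp only [hf, hc, Set.mem_ofPred_eq]
    split_ifs with h
    · have : Real.log k ≠ 0 := (Real.log_pos (by exact_mod_cast h.one_lt)).ne'
      field_simp
    · simp
  have hanti : ∀ D : ℝ, ∫ t in (Real.exp x)..(Real.exp y),
      (-(t⁻¹) / (Real.log t) ^ 2) * (Real.log t + D) =
      (-Real.log y + D / y) - (-Real.log x + D / x) := by
    intro D
    have := intervalIntegral.integral_eq_sub_of_hasDerivAt (a := Real.exp x) (b := Real.exp y)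
      (f := fun t => -Real.log (Real.log t) + D * f t)
      (f' := fun t => (-(t⁻¹) / (Real.log t) ^ 2) * (Real.log t + D)) ?_ ?_
    · rw [this]; simp [hf, div_eq_mul_inv]
    · intro t ht
      rw [Set.uIcc_of_le hab] at ht
      obtain ⟨h1, h2⟩ := hmem t ht
      have := ((Real.hasDerivAt_log (by linarith : t ≠ 0)).log h2.ne').neg.add
        ((hderiv t ht).const_mul D)
      convert! this using 1
      field_simp
      ring
    · apply ContinuousOn.intervalIntegrable
      rw [Set.uIcc_of_le hab]
      refine hcont.mul (ContinuousOn.add ?_ continuousOn_const)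
      exact Real.continuousOn_log.mono fun t ht => by
        have := (hmem t ht).1
        simp; linarith
  have hii : ∀ D : ℝ, IntervalIntegrable (fun t => (-(t⁻¹) / (Real.log t) ^ 2) * (Real.log t + D))
      MeasureTheory.volume (Real.exp x) (Real.exp y) := by
    intro D
    apply ContinuousOn.intervalIntegrable
    rw [Set.uIcc_of_le hab]
    refine hcont.mul (ContinuousOn.add ?_ continuousOn_const)
    exact Real.continuousOn_log.mono fun t ht => by
      have := (hmem t ht).1
      simp; linarith
  have hprod' : IntervalIntegrable (fun t => deriv f t * ∑ k ∈ Finset.Icc 0 ⌊t⌋₊, c k)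
      MeasureTheory.volume (Real.exp x) (Real.exp y) := by
    rw [intervalIntegrable_iff_integrableOn_Icc_of_le hab]
    exact hprod
  have hup : ∫ t in (Real.exp x)..(Real.exp y), deriv f t * ∑ k ∈ Finset.Icc 0 ⌊t⌋₊, c k ≤
      ∫ t in (Real.exp x)..(Real.exp y), (-(t⁻¹) / (Real.log t) ^ 2) * (Real.log t + -C) := by
    refine intervalIntegral.integral_mono_on hab hprod' (hii _) fun t ht => ?_
    rw [(hderiv t ht).deriv]
    obtain ⟨h1, h2⟩ := hmem t ht
    have h3 := (abs_le.1 (hC t h1.le)).1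
    refine mul_le_mul_of_nonpos_left (by linarith) ?_
    exact div_nonpos_of_nonpos_of_nonneg (by simp; linarith) (by positivity)
  have hlow : ∫ t in (Real.exp x)..(Real.exp y), (-(t⁻¹) / (Real.log t) ^ 2) * (Real.log t + C) ≤
      ∫ t in (Real.exp x)..(Real.exp y), deriv f t * ∑ k ∈ Finset.Icc 0 ⌊t⌋₊, c k := by
    refine intervalIntegral.integral_mono_on hab (hii _) hprod' fun t ht => ?_
    rw [(hderiv t ht).deriv]
    obtain ⟨h1, h2⟩ := hmem t ht
    have h3 := (abs_le.1 (hC t h1.le)).2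
    refine mul_le_mul_of_nonpos_left (by linarith) ?_
    exact div_nonpos_of_nonpos_of_nonneg (by simp; linarith) (by positivity)
  rw [hanti] at hup hlow
  rw [hlhs, ← intervalIntegral.integral_of_le hab] at habel
  have hMx := abs_le.1 (hC _ (Real.one_le_exp hx.le))
  have hMy := abs_le.1 (hC _ (Real.one_le_exp hy.le))
  rw [Real.log_exp] at hMx hMy
  have hfx : f (Real.exp x) = x⁻¹ := by simp [hf]
  have hfy : f (Real.exp y) = y⁻¹ := by simp [hf]
  rw [hfx, hfy] at habel
  have e1 := mul_le_mul_of_nonneg_left hMx.1 (inv_nonneg.2 hx.le)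
  have e2 := mul_le_mul_of_nonneg_left hMx.2 (inv_nonneg.2 hx.le)
  have e3 := mul_le_mul_of_nonneg_left hMy.1 (inv_nonneg.2 hy.le)
  have e4 := mul_le_mul_of_nonneg_left hMy.2 (inv_nonneg.2 hy.le)
  rw [mul_sub, inv_mul_cancel₀ hx.ne'] at e1 e2
  rw [mul_sub, inv_mul_cancel₀ hy.ne'] at e3 e4
  rw [Real.log_div hy.ne' hx.ne']
  simp only [div_eq_mul_inv] at *
  rw [abs_le]
  constructor <;> nlinarith

theorem recipSum_sub_recipSum_nonneg (A : Set ℕ) {x y : ℝ} (hxy : x ≤ y) :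
    0 ≤ recipSum A y - recipSum A x := by
  rw [recipSum_sub_recipSum A hxy]
  exact Finset.sum_nonneg fun n _ => by split_ifs <;> positivity

theorem recipSum_sub_recipSum_mono {A B : Set ℕ} (hAB : A ⊆ B) {x y : ℝ} (hxy : x ≤ y) :
    recipSum A y - recipSum A x ≤ recipSum B y - recipSum B x := by
  rw [recipSum_sub_recipSum A hxy, recipSum_sub_recipSum B hxy]
  refine Finset.sum_le_sum fun n _ => ?_
  by_cases h : n ∈ A
  · simp [h, hAB h]
  · rw [if_neg h]; split_ifs <;> positivity

theorem recipSum_primes_eq_zero {x : ℝ} (hx : x ≤ 1 / 2) : recipSum {p | p.Prime} x = 0 := by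
  refine Finset.sum_eq_zero fun n hn => if_neg fun hp => ?_
  have h2 : 2 ≤ n := Nat.Prime.two_le hp
  have h3 : n ≤ ⌊Real.exp x⌋₊ := (Finset.mem_Icc.1 hn).2
  have h4 : (2 : ℝ) ≤ Real.exp x := by
    have := (Nat.le_floor_iff (Real.exp_pos x).le).1 (h2.trans h3)
    exact_mod_cast this
  have h5 : Real.log 2 ≤ x := (Real.log_le_iff_le_exp (by norm_num)).2 h4
  linarith [Real.log_two_gt_d9]

theorem exists_abs_recipSum_mul_sub_le :
    ∃ C : ℝ, 0 ≤ C ∧ ∀ A : Set ℕ, (∀ p ∈ A, p.Prime) → ∀ x v : ℝ, 1 ≤ x → 0 < v →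
      |recipSum A (v * x) - recipSum A x| ≤ C + |Real.log v| := by
  obtain ⟨C, hC0, hC⟩ := exists_abs_recipSum_primes_sub_sub_log_le
  refine ⟨2 * C, by positivity, fun A hA x v hx hv => ?_⟩
  have hsub : A ⊆ {p | p.Prime} := hA
  have hx0 : 0 < x := by linarith
  have key : ∀ y z : ℝ, 1 / 2 ≤ y → y ≤ z →
      recipSum A z - recipSum A y ≤ 2 * C + Real.log (z / y) := by
    intro y z hy hyz
    have h1 := recipSum_sub_recipSum_mono hsub hyz
    have h2 := (abs_le.1 (hC y z (by linarith) hyz)).2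
    have h3 : C / y ≤ 2 * C := by
      rw [div_le_iff₀ (by linarith)]
      nlinarith
    linarith
  rcases le_total x (v * x) with h | h
  · rw [abs_of_nonneg (recipSum_sub_recipSum_nonneg A h)]
    refine (key x (v * x) (by linarith) h).trans ?_
    rw [mul_div_cancel_right₀ _ hx0.ne']
    linarith [le_abs_self (Real.log v)]
  · rw [abs_sub_comm, abs_of_nonneg (recipSum_sub_recipSum_nonneg A h)]
    have hvx : 0 < v * x := by positivity
    have hlog : Real.log (x / (v * x)) = -Real.log v := by
      rw [← Real.log_inv]; congr 1; field_simp
    rcases le_total (1 / 2) (v * x) with h' | h'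
    · refine (key _ _ h' h).trans ?_
      rw [hlog]
      linarith [neg_le_abs (Real.log v)]
    · have h1 := recipSum_sub_recipSum_mono hsub h
      have h2 := (abs_le.1 (hC (1 / 2) x (by norm_num) (by linarith))).2
      rw [recipSum_primes_eq_zero h'] at h1
      rw [recipSum_primes_eq_zero le_rfl] at h2
      have h3 : Real.log (x / (1 / 2)) ≤ Real.log (x / (v * x)) :=
        Real.log_le_log (by positivity) (by gcongr)
      rw [hlog] at h3
      have h4 : C / (1 / 2) = 2 * C := by ring
      linarith [neg_le_abs (Real.log v)]

theorem abs_sum_Ioc_div_sub_add_le {c d : ℕ → ℝ} {ε : ℝ} {a b : ℕ} (hab : a ≤ b)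
    (h : ∀ n, a ≤ n → |∑ k ∈ Finset.Icc 0 n, c k| ≤ ε * ∑ k ∈ Finset.Icc 0 n, d k) :
    |∑ k ∈ Finset.Ioc a b, c k / k - (∑ k ∈ Finset.Icc 0 b, c k) / (b + 1)
        + (∑ k ∈ Finset.Icc 0 a, c k) / (a + 1)| ≤
      ε * (∑ k ∈ Finset.Ioc a b, d k / k - (∑ k ∈ Finset.Icc 0 b, d k) / (b + 1)
        + (∑ k ∈ Finset.Icc 0 a, d k) / (a + 1)) := by
  induction b, hab using Nat.le_induction with
  | base => simp
  | succ b hab ih =>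
    have step : ∀ e : ℕ → ℝ,
        ∑ k ∈ Finset.Ioc a (b + 1), e k / k
          - (∑ k ∈ Finset.Icc 0 (b + 1), e k) / ((b + 1 : ℕ) + 1)
          + (∑ k ∈ Finset.Icc 0 a, e k) / (a + 1) =
        (∑ k ∈ Finset.Ioc a b, e k / k - (∑ k ∈ Finset.Icc 0 b, e k) / (b + 1)
          + (∑ k ∈ Finset.Icc 0 a, e k) / (a + 1)) +
        (∑ k ∈ Finset.Icc 0 (b + 1), e k) * (1 / ((b : ℝ) + 1) - 1 / ((b : ℝ) + 2)) := by
      intro e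
      rw [← Finset.insert_Ioc_right_eq_Ioc_add_one hab, Finset.sum_insert (by simp),
        ← Finset.insert_Icc_right_eq_Icc_add_one (by omega : 0 ≤ b + 1),
        Finset.sum_insert (by simp)]
      push_cast
      field_simp
      ring
    rw [step c, step d, mul_add]
    refine (abs_add_le _ _).trans (add_le_add ih ?_)
    have hpos : 0 ≤ 1 / ((b : ℝ) + 1) - 1 / ((b : ℝ) + 2) := by
      rw [sub_nonneg]
      exact one_div_le_one_div_of_le (by positivity) (by linarith)
    rw [abs_mul, abs_of_nonneg hpos, ← mul_assoc]
    exact mul_le_mul_of_nonneg_right (h _ (by omega)) hpos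

theorem ncard_inter_Icc_eq_sum (A : Set ℕ) (hA : 0 ∉ A) (N : ℕ) :
    ((A ∩ Set.Icc 1 N).ncard : ℝ) = ∑ k ∈ Finset.Icc 0 N, if k ∈ A then (1 : ℝ) else 0 := by
  rw [← Finset.sum_filter, Finset.sum_const, nsmul_eq_mul, mul_one, ← Set.ncard_coe_finset]
  congr 2
  ext n
  simp only [Set.mem_inter_iff, Set.mem_Icc, Finset.coe_filter, Finset.mem_Icc, Set.mem_ofPred_eq]
  constructor
  · rintro ⟨h1, h2, h3⟩; exact ⟨⟨by omega, h3⟩, h1⟩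
  · rintro ⟨⟨h1, h2⟩, h3⟩
    exact ⟨h3, Nat.one_le_iff_ne_zero.2 fun h => hA (h ▸ h3), h2⟩

theorem tendsto_recipSum_mul_sub {A : Set ℕ} (hA : ∀ p ∈ A, Nat.Prime p) {θ : ℝ}
    (hdens : Tendsto
      (fun N : ℕ => ((A ∩ Set.Icc 1 N).ncard : ℝ) /
        (({p : ℕ | Nat.Prime p} ∩ Set.Icc 1 N).ncard : ℝ)) atTop (nhds θ))
    {v : ℝ} (hv : 0 < v) :
    Tendsto (fun x => recipSum A (v * x) - recipSum A x) atTop (nhds (θ * Real.log v)) := by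
  obtain ⟨C, hC0, hC⟩ := exists_abs_recipSum_primes_sub_sub_log_le
  obtain ⟨P, hP⟩ : ∃ P : Set ℕ, P = {p : ℕ | Nat.Prime p} := ⟨_, rfl⟩
  have hPp : ∀ p ∈ P, Nat.Prime p := fun p hp => by rw [hP] at hp; exact hp
  have hAP : ∀ p ∈ A, p ∈ P := fun p hp => by rw [hP]; exact hA p hp
  rw [← hP] at hdens hC
  obtain ⟨K, hK0, hK⟩ := exists_abs_recipSum_mul_sub_le
  have main : ∀ v : ℝ, 1 ≤ v →
      Tendsto (fun x => recipSum A (v * x) - recipSum A x) atTop (nhds (θ * Real.log v)) := by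
    intro v hv
    have hprime : Tendsto (fun x => recipSum P (v * x) - recipSum P x) atTop
        (nhds (Real.log v)) := by
      rw [tendsto_iff_norm_sub_tendsto_zero]
      refine squeeze_zero' (Eventually.of_forall fun _ => norm_nonneg _) ?_
        (tendsto_const_nhds (x := C).div_atTop tendsto_id)
      filter_upwards [eventually_ge_atTop 1] with x hx
      have := hC x (v * x) (by linarith) (by nlinarith)
      rwa [mul_div_cancel_right₀ _ (by linarith)] at this
    have hdiff : Tendsto (fun x => (recipSum A (v * x) - recipSum A x) -
        θ * (recipSum P (v * x) - recipSum P x)) atTop (nhds 0) := by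
      rw [Metric.tendsto_atTop']
      intro η hη
      set B := K + |Real.log v| + 2 with hB
      have hBpos : 0 < B := by positivity
      set ε := η / (2 * B) with hε
      have hεpos : 0 < ε := by positivity
      obtain ⟨N₀, hN₀⟩ := (Metric.tendsto_atTop.1 hdens) ε hεpos
      refine ⟨max 1 (N₀ : ℝ), fun x hx => ?_⟩
      have hx1 : 1 ≤ x := (le_max_left _ _).trans hx.le
      have hxv : x ≤ v * x := by nlinarith
      have hfl : ⌊Real.exp x⌋₊ ≤ ⌊Real.exp (v * x)⌋₊ := Nat.floor_le_floor (Real.exp_le_exp.2 hxv)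
      have hN : N₀ ≤ ⌊Real.exp x⌋₊ := by
        refine Nat.le_floor ?_
        linarith [Real.add_one_le_exp x, (le_max_right 1 (N₀ : ℝ)).trans hx.le]
      have hcmp := abs_sum_Ioc_div_sub_add_le
        (c := fun k => (if k ∈ A then (1 : ℝ) else 0) - θ * (if k ∈ P then 1 else 0))
        (d := fun k => if k ∈ P then (1 : ℝ) else 0) (ε := ε) hfl
      have hE : ∀ n, ⌊Real.exp x⌋₊ ≤ n →
          |∑ k ∈ Finset.Icc 0 n, ((if k ∈ A then (1 : ℝ) else 0) - θ * (if k ∈ P then 1 else 0))| ≤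
          ε * ∑ k ∈ Finset.Icc 0 n, if k ∈ P then (1 : ℝ) else 0 := by
        intro n hn
        have h1 := hN₀ n (hN.trans hn)
        rw [ncard_inter_Icc_eq_sum A (fun h => Nat.not_prime_zero (hA 0 h)),
          ncard_inter_Icc_eq_sum P (fun h => Nat.not_prime_zero (hPp 0 h))] at h1
        rw [Finset.sum_sub_distrib, ← Finset.mul_sum]
        set a := ∑ k ∈ Finset.Icc 0 n, if k ∈ A then (1 : ℝ) else 0 with ha
        set p := ∑ k ∈ Finset.Icc 0 n, if k ∈ P then (1 : ℝ) else 0 with hp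
        have hap : a ≤ p := Finset.sum_le_sum fun k _ => by
          by_cases hk : k ∈ A
          · have : k ∈ P := hAP k hk
            simp [hk, this]
          · rw [if_neg hk]; split_ifs <;> norm_num
        have ha0 : 0 ≤ a := Finset.sum_nonneg fun k _ => by split_ifs <;> norm_num
        rcases (ha0.trans hap).eq_or_lt with h0 | h0
        · have : a = 0 := le_antisymm (h0 ▸ hap) ha0
          simp [← h0, this]
        · rw [Real.dist_eq] at h1
          have : a - θ * p = (a / p - θ) * p := by field_simp
          rw [this, abs_mul, abs_of_pos h0]
          exact mul_le_mul_of_nonneg_right h1.le h0.le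
      have hcmp := hcmp hE
      have hEb := hE _ hfl
      have hEa := hE _ le_rfl
      set a := ⌊Real.exp x⌋₊ with ha
      set b := ⌊Real.exp (v * x)⌋₊ with hb
      have hDa : (∑ k ∈ Finset.Icc 0 a, if k ∈ P then (1 : ℝ) else 0) / (a + 1) ≤ 1 := by
        rw [div_le_one (by positivity)]
        refine (Finset.sum_le_sum (g := fun _ => (1 : ℝ)) fun k _ => by split_ifs <;> norm_num).trans ?_
        simp
      have hc : ∑ k ∈ Finset.Ioc a b,
          ((if k ∈ A then (1 : ℝ) else 0) - θ * (if k ∈ P then 1 else 0)) / k =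
          (recipSum A (v * x) - recipSum A x) - θ * (recipSum P (v * x) - recipSum P x) := by
        rw [recipSum_sub_recipSum A hxv, recipSum_sub_recipSum P hxv, Finset.mul_sum,
          ← Finset.sum_sub_distrib]
        refine Finset.sum_congr rfl fun k _ => ?_
        rw [sub_div, mul_div_assoc, ite_div, ite_div, zero_div]
      have hd : ∑ k ∈ Finset.Ioc a b, (if k ∈ P then (1 : ℝ) else 0) / k =
          recipSum P (v * x) - recipSum P x := by
        rw [recipSum_sub_recipSum P hxv]
        refine Finset.sum_congr rfl fun k _ => ?_
        rw [ite_div, zero_div]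
      rw [hc, hd] at hcmp
      have hKP := (abs_le.1 (hK P hPp x v hx1 (by linarith))).2
      have div_bd : ∀ {s t : ℝ} (n : ℕ), |s| ≤ ε * t → |s / (n + 1)| ≤ ε * (t / (n + 1)) := by
        intro s t n hst
        have : (0 : ℝ) < n + 1 := by positivity
        rw [abs_div, abs_of_pos this, ← mul_div_assoc]
        gcongr
      have hEb' := div_bd b hEb
      have hEa' := div_bd a hEa
      rw [Real.dist_eq, sub_zero]
      have hεB : ε * B = η / 2 := by rw [hε]; field_simp
      have e1 := mul_le_mul_of_nonneg_left hDa hεpos.le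
      have e2 := mul_le_mul_of_nonneg_left hKP hεpos.le
      have e3 : ε * (K + |Real.log v|) + 2 * ε = η / 2 := by rw [← hεB, hB]; ring
      rw [mul_add, mul_sub] at hcmp
      have h1 := abs_le.1 hcmp
      have h2 := abs_le.1 hEb'
      have h3 := abs_le.1 hEa'
      rw [abs_lt]
      constructor <;> linarith
    simpa using hdiff.add (hprime.const_mul θ)
  rcases le_total 1 v with h | h
  · exact main v h
  · have h1 := (main v⁻¹ ((one_le_inv₀ hv).2 h)).comp
      (tendsto_id.const_mul_atTop hv : Tendsto (fun x => v * x) atTop atTop)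
    have h2 := h1.neg
    rw [Real.log_inv, mul_neg, neg_neg] at h2
    refine h2.congr fun x => ?_
    simp only [Function.comp]
    rw [inv_mul_cancel_left₀ hv.ne']
    ring

theorem integral_log_mul_exp_neg :
    ∫ v in Set.Ioi (0 : ℝ), Real.log v * Real.exp (-v) = -Real.eulerMascheroniConstant := by
  have h1 := Complex.hasDerivAt_GammaIntegral (s := 1) (by simp)
  have h2 : HasDerivAt Complex.GammaIntegral (-(Real.eulerMascheroniConstant : ℂ)) 1 := by
    refine Complex.hasDerivAt_Gamma_one.congr_of_eventuallyEq ?_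
    have : ∀ᶠ s : ℂ in nhds 1, 0 < s.re :=
      (Complex.continuous_re.tendsto 1).eventually (lt_mem_nhds (by simp))
    filter_upwards [this] with s hs
    exact (Complex.Gamma_eq_integral hs).symm
  have h3 := h1.unique h2
  have h4 : (∫ t : ℝ in Set.Ioi 0, (t : ℂ) ^ ((1 : ℂ) - 1) * (Real.log t * Real.exp (-t))) =
      ((∫ v in Set.Ioi (0 : ℝ), Real.log v * Real.exp (-v) : ℝ) : ℂ) := by
    rw [← integral_complex_ofReal]
    simp
  rw [h4] at h3
  exact_mod_cast h3

theorem integrableOn_log_mul_exp_neg :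
    MeasureTheory.IntegrableOn (fun v => Real.log v * Real.exp (-v)) (Set.Ioi 0) := by
  by_contra h
  have h1 := integral_log_mul_exp_neg
  rw [MeasureTheory.integral_undef h] at h1
  linarith [Real.one_half_lt_eulerMascheroniConstant]

theorem recipSum_monotone (A : Set ℕ) : Monotone (recipSum A) := fun _ _ h =>
  sub_nonneg.1 (recipSum_sub_recipSum_nonneg A h)

theorem tsum_rpow_eq_integral_recipSum {A : Set ℕ} (hA : ∀ p ∈ A, Nat.Prime p) {x : ℝ}
    (hx : 0 < x) :
    ∑' p : ℕ, (if p ∈ A then (p : ℝ) ^ (-(1 + x⁻¹)) else 0) =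
      ∫ v in Set.Ioi (0 : ℝ), Real.exp (-v) * recipSum A (v * x) := by
  set F : ℕ → ℝ → ℝ := fun p => (Set.Ioi (Real.log p / x)).indicator
    fun v => (if p ∈ A then (1 : ℝ) / p else 0) * Real.exp (-v) with hF
  have hnn : ∀ p v, 0 ≤ F p v := fun p v => Set.indicator_nonneg
    (fun v _ => by split_ifs <;> positivity) v
  have hint : ∀ p, MeasureTheory.Integrable (F p)
      (MeasureTheory.volume.restrict (Set.Ioi (0 : ℝ))) := fun p => by
    apply MeasureTheory.Integrable.integrableOn
    rw [MeasureTheory.integrable_indicator_iff measurableSet_Ioi]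
    exact (integrableOn_exp_neg_Ioi _).const_mul _
  have hval : ∀ p, ∫ v in Set.Ioi (0 : ℝ), F p v =
      if p ∈ A then (p : ℝ) ^ (-(1 + x⁻¹)) else 0 := fun p => by
    have hl : 0 ≤ Real.log p / x := div_nonneg (Real.log_natCast_nonneg p) hx.le
    rw [MeasureTheory.setIntegral_indicator measurableSet_Ioi, Set.Ioi_inter_Ioi,
      sup_eq_right.2 hl, MeasureTheory.integral_const_mul, integral_exp_neg_Ioi]
    split_ifs with h
    · have hp : (0 : ℝ) < p := by exact_mod_cast (hA p h).pos
      rw [Real.rpow_def_of_pos hp, one_div, ← Real.exp_log (inv_pos.2 hp), ← Real.exp_add,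
        Real.log_inv]
      congr 1
      field_simp
      ring
    · simp
  have hsummable : Summable fun p => ∫ v in Set.Ioi (0 : ℝ), ‖F p v‖ := by
    simp only [Real.norm_of_nonneg (hnn _ _), hval]
    refine Summable.of_nonneg_of_le (fun p => by split_ifs <;> positivity) (fun p => ?_)
      (Real.summable_nat_rpow.2 (by linarith [inv_pos.2 hx] : -(1 + x⁻¹) < -1))
    split_ifs
    · exact le_rfl
    · positivity
  have := MeasureTheory.hasSum_integral_of_summable_integral_norm hint hsummable
  simp only [hval] at this
  rw [this.tsum_eq]
  -- the endpoint `v = log p / x` is null, so work off a countable set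
  have hnull : ∀ᵐ v ∂(MeasureTheory.volume.restrict (Set.Ioi (0 : ℝ))),
      v ∉ Set.range fun p : ℕ => Real.log p / x :=
    MeasureTheory.ae_restrict_of_ae ((Set.countable_range _).ae_notMem _)
  refine MeasureTheory.integral_congr_ae ?_
  filter_upwards [hnull] with v hv
  have hmem : ∀ p : ℕ, p ∈ A → (Real.log p / x < v ↔ p ≤ ⌊Real.exp (v * x)⌋₊) := fun p hp => by
    have hp0 : (0 : ℝ) < p := by exact_mod_cast (hA p hp).pos
    have hne : Real.log p / x ≠ v := fun h => hv ⟨p, h⟩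
    rw [Nat.le_floor_iff (Real.exp_pos _).le, ← Real.log_le_iff_le_exp hp0, ← div_le_iff₀ hx]
    exact ⟨le_of_lt, fun h => lt_of_le_of_ne h hne⟩
  rw [tsum_eq_sum (s := Finset.Icc 0 ⌊Real.exp (v * x)⌋₊), recipSum, Finset.mul_sum]
  · refine Finset.sum_congr rfl fun p hp => ?_
    by_cases h : p ∈ A
    · have := (hmem p h).2 (Finset.mem_Icc.1 hp).2
      simp [hF, h, this, mul_comm]
    · simp [hF, h, Set.indicator]
  · intro p hp
    by_cases h : p ∈ A
    · refine Set.indicator_of_notMem (fun h' => hp ?_) _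
      exact Finset.mem_Icc.2 ⟨Nat.zero_le _, (hmem p h).1 h'⟩
    · simp [hF, h, Set.indicator]

theorem tendsto_tsum_rpow_sub_recipSum {A : Set ℕ} (hA : ∀ p ∈ A, Nat.Prime p) {θ : ℝ}
    (hlog : ∀ v : ℝ, 0 < v →
      Tendsto (fun x => recipSum A (v * x) - recipSum A x) atTop (nhds (θ * Real.log v))) :
    Tendsto (fun x : ℝ => ∑' p : ℕ, (if p ∈ A then (p : ℝ) ^ (-(1 + x⁻¹)) else 0) - recipSum A x)
      atTop (nhds (-(Real.eulerMascheroniConstant * θ))) := by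
  obtain ⟨C, hC0, hC⟩ := exists_abs_recipSum_mul_sub_le
  have hmeas : ∀ x : ℝ, MeasureTheory.AEStronglyMeasurable
      (fun v => Real.exp (-v) * (recipSum A (v * x) - recipSum A x))
      (MeasureTheory.volume.restrict (Set.Ioi (0 : ℝ))) := fun x => by
    have : Measurable (recipSum A) := (recipSum_monotone A).measurable
    exact Measurable.aestronglyMeasurable (by fun_prop)
  have hbint : MeasureTheory.IntegrableOn (fun v : ℝ => C * Real.exp (-v) +
      |Real.log v * Real.exp (-v)|) (Set.Ioi 0) :=
    ((integrableOn_exp_neg_Ioi 0).const_mul C).add integrableOn_log_mul_exp_neg.abs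
  have hbound : ∀ x : ℝ, 1 ≤ x → ∀ᵐ v ∂(MeasureTheory.volume.restrict (Set.Ioi (0 : ℝ))),
      ‖Real.exp (-v) * (recipSum A (v * x) - recipSum A x)‖ ≤
        C * Real.exp (-v) + |Real.log v * Real.exp (-v)| := fun x hx => by
    filter_upwards [MeasureTheory.ae_restrict_mem measurableSet_Ioi] with v hv
    have := mul_le_mul_of_nonneg_left (hC A hA x v hx hv) (Real.exp_pos (-v)).le
    rw [norm_mul, Real.norm_eq_abs, Real.norm_eq_abs, Real.abs_exp, abs_mul, Real.abs_exp]
    linarith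
  have hlim := MeasureTheory.tendsto_integral_filter_of_dominated_convergence
    (μ := MeasureTheory.volume.restrict (Set.Ioi (0 : ℝ))) (l := atTop)
    (F := fun x v => Real.exp (-v) * (recipSum A (v * x) - recipSum A x))
    (f := fun v => Real.exp (-v) * (θ * Real.log v)) _ (Eventually.of_forall hmeas)
    ((eventually_ge_atTop 1).mono hbound) hbint (by
      filter_upwards [MeasureTheory.ae_restrict_mem measurableSet_Ioi] with v hv
      exact (hlog v hv).const_mul _)
  have hval : ∫ v in Set.Ioi (0 : ℝ), Real.exp (-v) * (θ * Real.log v) =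
      -(Real.eulerMascheroniConstant * θ) := by
    rw [← neg_mul, ← integral_log_mul_exp_neg, ← MeasureTheory.integral_mul_const]
    congr 1 with v
    ring
  rw [hval] at hlim
  refine hlim.congr' ?_
  filter_upwards [eventually_ge_atTop 1] with x hx
  have h1 : MeasureTheory.IntegrableOn
      (fun v => Real.exp (-v) * (recipSum A (v * x) - recipSum A x)) (Set.Ioi 0) :=
    hbint.mono' (hmeas x) (hbound x hx)
  have h2 : MeasureTheory.IntegrableOn (fun v => Real.exp (-v) * recipSum A x) (Set.Ioi 0) :=
    (integrableOn_exp_neg_Ioi 0).mul_const _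
  rw [tsum_rpow_eq_integral_recipSum hA (by linarith), sub_eq_of_eq_add]
  have h3 : ∫ v in Set.Ioi (0 : ℝ), Real.exp (-v) * recipSum A x = recipSum A x := by
    rw [MeasureTheory.integral_mul_const, integral_exp_neg_Ioi]; simp
  have h4 := MeasureTheory.integral_add h1 h2
  rw [h3] at h4
  refine Eq.trans ?_ h4
  congr 1 with v
  ring

/-- The completely multiplicative function that is `n ↦ n ^ (-s)` on the positive integers all of
whose prime factors satisfy `P`, and zero elsewhere. -/
noncomputable def supportedRpow (P : ℕ → Prop) (s : ℝ) : ℕ →*₀ ℝ where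
  toFun n := if n ≠ 0 ∧ ∀ p : ℕ, p.Prime → p ∣ n → P p then (n : ℝ) ^ (-s) else 0
  map_zero' := by simp
  map_one' := by
    have : ∀ p : ℕ, p.Prime → p ∣ 1 → P p := fun p hp h => absurd (Nat.dvd_one.1 h) hp.ne_one
    rw [if_pos ⟨one_ne_zero, this⟩]
    simp
  map_mul' m n := by
    have h : (m * n ≠ 0 ∧ ∀ p : ℕ, p.Prime → p ∣ m * n → P p) ↔
        (m ≠ 0 ∧ ∀ p : ℕ, p.Prime → p ∣ m → P p) ∧ (n ≠ 0 ∧ ∀ p : ℕ, p.Prime → p ∣ n → P p) := by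
      constructor
      · rintro ⟨h0, h⟩
        exact ⟨⟨left_ne_zero_of_mul h0, fun p hp hd => h p hp (hd.mul_right n)⟩,
          right_ne_zero_of_mul h0, fun p hp hd => h p hp (hd.mul_left m)⟩
      · rintro ⟨⟨h1, h2⟩, h3, h4⟩
        refine ⟨mul_ne_zero h1 h3, fun p hp hd => ?_⟩
        exact (hp.dvd_mul.1 hd).elim (h2 p hp) (h4 p hp)
    rw [if_congr h rfl rfl, ite_and]
    split_ifs
    · push_cast
      exact Real.mul_rpow (Nat.cast_nonneg m) (Nat.cast_nonneg n)
    all_goals simp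

theorem supportedRpow_apply (P : ℕ → Prop) (s : ℝ) (n : ℕ) :
    supportedRpow P s n =
      if n ≠ 0 ∧ ∀ p : ℕ, p.Prime → p ∣ n → P p then (n : ℝ) ^ (-s) else 0 := rfl

theorem supportedRpow_nonneg (P : ℕ → Prop) (s : ℝ) (n : ℕ) : 0 ≤ supportedRpow P s n := by
  rw [supportedRpow_apply]; split_ifs <;> positivity

theorem supportedRpow_le (P : ℕ → Prop) (s : ℝ) (n : ℕ) :
    supportedRpow P s n ≤ (n : ℝ) ^ (-s) := by
  rw [supportedRpow_apply]; split_ifs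
  · exact le_rfl
  · positivity

theorem supportedRpow_prime (P : ℕ → Prop) (s : ℝ) {p : ℕ} (hp : p.Prime) :
    supportedRpow P s p = if P p then (p : ℝ) ^ (-s) else 0 := by
  rw [supportedRpow_apply]
  refine if_congr ⟨fun h => h.2 p hp dvd_rfl, fun h => ⟨hp.ne_zero, fun q hq hd => ?_⟩⟩ rfl rfl
  rwa [(Nat.prime_dvd_prime_iff_eq hq hp).1 hd]

theorem summable_supportedRpow (P : ℕ → Prop) {s : ℝ} (hs : 1 < s) :
    Summable (supportedRpow P s) :=
  Summable.of_nonneg_of_le (supportedRpow_nonneg P s) (supportedRpow_le P s)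
    (Real.summable_nat_rpow.2 (by linarith))

theorem one_le_tsum_supportedRpow (P : ℕ → Prop) {s : ℝ} (hs : 1 < s) :
    1 ≤ ∑' n, supportedRpow P s n := by
  have := (summable_supportedRpow P hs).sum_le_tsum {1} (fun n _ => supportedRpow_nonneg P s n)
  simpa using this

/-- The difference between `-log (1 - y)` and its linear approximation `y`. -/
noncomputable def logRemainder (y : ℝ) : ℝ := -Real.log (1 - y) - y

theorem logRemainder_zero : logRemainder 0 = 0 := by simp [logRemainder]

theorem abs_logRemainder_le {y : ℝ} (h1 : y ≤ 1 / 2) :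
    |logRemainder y| ≤ 2 * y ^ 2 := by
  have h3 : Real.log (1 - y) ≤ -y := by
    have := Real.log_le_sub_one_of_pos (by linarith : 0 < 1 - y)
    linarith
  have h4 : -Real.log (1 - y) ≤ (1 - y)⁻¹ - 1 := by
    rw [← Real.log_inv]
    exact Real.log_le_sub_one_of_pos (inv_pos.2 (by linarith))
  have h5 : (1 - y)⁻¹ - 1 - y ≤ 2 * y ^ 2 := by
    have h6 : (1 - y)⁻¹ - 1 - y = y ^ 2 * (1 - y)⁻¹ := by
      have : 1 - y ≠ 0 := by linarith
      field_simp; ring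
    have h7 : (1 - y)⁻¹ ≤ 2 := by
      rw [inv_le_comm₀ (by linarith) (by norm_num)]; linarith
    rw [h6]; nlinarith [sq_nonneg y]
  rw [logRemainder, abs_of_nonneg (by linarith)]
  linarith

theorem prime_rpow_neg_le {p : ℕ} (hp : p.Prime) {s : ℝ} (hs : 1 ≤ s) :
    (p : ℝ) ^ (-s) ≤ (p : ℝ)⁻¹ := by
  rw [← Real.rpow_neg_one]
  exact Real.rpow_le_rpow_of_exponent_le (by exact_mod_cast hp.one_le) (by linarith)

theorem prime_inv_le_half {p : ℕ} (hp : p.Prime) : (p : ℝ)⁻¹ ≤ 1 / 2 := by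
  rw [inv_eq_one_div]
  exact one_div_le_one_div_of_le (by norm_num) (by exact_mod_cast hp.two_le)

theorem abs_logRemainder_prime_le {A : Set ℕ} (hA : ∀ p ∈ A, Nat.Prime p) {s : ℝ} (hs : 1 ≤ s)
    (p : ℕ) :
    |logRemainder (if p ∈ A then (p : ℝ) ^ (-s) else 0)| ≤ 2 * ((p : ℝ) ^ 2)⁻¹ := by
  split_ifs with h
  · have h1 := prime_rpow_neg_le (hA p h) hs
    refine (abs_logRemainder_le (h1.trans (prime_inv_le_half (hA p h)))).trans ?_
    rw [← inv_pow]
    gcongr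
  · rw [logRemainder_zero, abs_zero]; positivity

theorem summable_two_mul_inv_sq : Summable fun p : ℕ => 2 * ((p : ℝ) ^ 2)⁻¹ :=
  (Real.summable_nat_pow_inv.2 one_lt_two).mul_left 2

theorem summable_logRemainder {A : Set ℕ} (hA : ∀ p ∈ A, Nat.Prime p) {s : ℝ} (hs : 1 ≤ s) :
    Summable fun p : ℕ => logRemainder (if p ∈ A then (p : ℝ) ^ (-s) else 0) :=
  Summable.of_norm_bounded summable_two_mul_inv_sq (abs_logRemainder_prime_le hA hs)

theorem summable_ite_rpow (A : Set ℕ) {s : ℝ} (hs : 1 < s) :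
    Summable fun p : ℕ => if p ∈ A then (p : ℝ) ^ (-s) else 0 := by
  refine Summable.of_nonneg_of_le (fun p => by split_ifs <;> positivity) (fun p => ?_)
    (Real.summable_nat_rpow.2 (by linarith : -s < -1))
  split_ifs
  · exact le_rfl
  · positivity

theorem log_prod_prime_supportedRpow {A : Set ℕ} (hA : ∀ p ∈ A, Nat.Prime p) {s : ℝ}
    (hs : 1 ≤ s) (t : Finset ℕ) :
    Real.log (∏ p ∈ t with p.Prime, (1 - supportedRpow (· ∈ A) s p)⁻¹) =
      ∑ p ∈ t, (if p ∈ A then (p : ℝ) ^ (-s) else 0) +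
      ∑ p ∈ t, logRemainder (if p ∈ A then (p : ℝ) ^ (-s) else 0) := by
  rw [Real.log_prod, Finset.sum_filter, ← Finset.sum_add_distrib]
  · refine Finset.sum_congr rfl fun p _ => ?_
    by_cases hp : p.Prime
    · rw [if_pos hp, supportedRpow_prime _ _ hp, Real.log_inv, logRemainder]
      ring
    · have : p ∉ A := fun h => hp (hA p h)
      simp [hp, this, logRemainder_zero]
  · intro p hp
    have hp' := (Finset.mem_filter.1 hp).2
    have := (supportedRpow_le (· ∈ A) s p).trans
      ((prime_rpow_neg_le hp' hs).trans (prime_inv_le_half hp'))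
    exact inv_ne_zero (by linarith)

theorem log_tsum_supportedRpow {A : Set ℕ} (hA : ∀ p ∈ A, Nat.Prime p) {s : ℝ} (hs : 1 < s) :
    Real.log (∑' n, supportedRpow (· ∈ A) s n) =
      ∑' p : ℕ, (if p ∈ A then (p : ℝ) ^ (-s) else 0) +
      ∑' p : ℕ, logRemainder (if p ∈ A then (p : ℝ) ^ (-s) else 0) := by
  have h1 := EulerProduct.eulerProduct_completely_multiplicative
    (f := supportedRpow (· ∈ A) s) (summable_supportedRpow _ hs).norm
  have h2 := h1.log (by linarith [one_le_tsum_supportedRpow (· ∈ A) hs])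
  refine tendsto_nhds_unique h2 ?_
  have h3 := ((summable_ite_rpow A hs).hasSum.tendsto_sum_nat).add
    ((summable_logRemainder hA hs.le).hasSum.tendsto_sum_nat)
  refine h3.congr fun n => ?_
  rw [Nat.primesBelow, log_prod_prime_supportedRpow hA hs.le]

theorem tendsto_tsum_logRemainder {A : Set ℕ} (hA : ∀ p ∈ A, Nat.Prime p) :
    Tendsto (fun x : ℝ => ∑' p : ℕ, logRemainder (if p ∈ A then (p : ℝ) ^ (-(1 + x⁻¹)) else 0))
      atTop (nhds (∑' p : ℕ, logRemainder (if p ∈ A then (p : ℝ) ^ (-(1 : ℝ)) else 0))) := by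
  refine tendsto_tsum_of_dominated_convergence summable_two_mul_inv_sq (fun p => ?_) ?_
  · split_ifs with h
    · have hp : (0 : ℝ) < p := by exact_mod_cast (hA p h).pos
      have hle : (p : ℝ) ^ (-(1 : ℝ)) ≤ 1 / 2 :=
        (prime_rpow_neg_le (hA p h) le_rfl).trans (prime_inv_le_half (hA p h))
      have h1 : Tendsto (fun x : ℝ => -(1 + x⁻¹)) atTop (nhds (-(1 : ℝ))) := by
        simpa using (tendsto_inv_atTop_zero.const_add (1 : ℝ)).neg
      have h2 : Tendsto (fun x : ℝ => (p : ℝ) ^ (-(1 + x⁻¹))) atTop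
          (nhds ((p : ℝ) ^ (-(1 : ℝ)))) :=
        ((Real.continuous_const_rpow hp.ne').tendsto _).comp h1
      exact ((h2.const_sub 1).log (by linarith)).neg.sub h2
    · exact tendsto_const_nhds
  · filter_upwards [eventually_gt_atTop 0] with x hx p
    exact abs_logRemainder_prime_le hA (by linarith [inv_pos.2 hx]) p

theorem harmSum_eq_prod (A : Set ℕ) (N : ℕ) :
    harmSum (fun p => p ≤ N ∧ p ∈ A) =
      ∏ p ∈ Finset.Icc 0 N with p.Prime, (1 - supportedRpow (· ∈ A) 1 p)⁻¹ := by
  have hlt : ∀ {p : ℕ}, p.Prime →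
      ‖((supportedRpow (fun p => p ≤ N ∧ p ∈ A) 1 : ℕ →*₀ ℝ) : ℕ →* ℝ) p‖ < 1 := by
    intro p hp
    change ‖supportedRpow (fun p => p ≤ N ∧ p ∈ A) 1 p‖ < 1
    rw [Real.norm_of_nonneg (supportedRpow_nonneg _ _ _)]
    have := (supportedRpow_le (fun p => p ≤ N ∧ p ∈ A) 1 p).trans
      ((prime_rpow_neg_le hp le_rfl).trans (prime_inv_le_half hp))
    linarith
  have h := (EulerProduct.summable_and_hasSum_factoredNumbers_prod_filter_prime_geometric hlt
    ((Finset.Icc 0 N).filter (· ∈ A))).2.tsum_eq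
  have hset : {n : ℕ | 0 < n ∧ ∀ p : ℕ, p.Prime → p ∣ n → p ≤ N ∧ p ∈ A} =
      Nat.factoredNumbers ((Finset.Icc 0 N).filter (· ∈ A)) := by
    ext n
    simp only [Set.mem_ofPred_eq, Nat.mem_factoredNumbers, Finset.mem_filter, Finset.mem_Icc,
      Nat.mem_primeFactorsList', Nat.pos_iff_ne_zero]
    constructor
    · rintro ⟨h0, h⟩
      exact ⟨h0, fun p hp => ⟨⟨Nat.zero_le _, (h p hp.1 hp.2.1).1⟩, (h p hp.1 hp.2.1).2⟩⟩
    · rintro ⟨h0, h⟩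
      exact ⟨h0, fun p hp hd => ⟨(h p ⟨hp, hd, h0⟩).1.2, (h p ⟨hp, hd, h0⟩).2⟩⟩
  have hsum : harmSum (fun p => p ≤ N ∧ p ∈ A) =
      ∑' m : Nat.factoredNumbers ((Finset.Icc 0 N).filter (· ∈ A)),
        ((supportedRpow (fun p => p ≤ N ∧ p ∈ A) 1 : ℕ →*₀ ℝ) : ℕ →* ℝ) m := by
    rw [← hset]
    refine tsum_congr fun n => ?_
    change _ = supportedRpow (fun p => p ≤ N ∧ p ∈ A) 1 n
    rw [supportedRpow_apply, if_pos ⟨n.2.1.ne', n.2.2⟩, Real.rpow_neg_one, one_div]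
  rw [hsum, h, Finset.filter_filter, Finset.prod_filter, Finset.prod_filter]
  refine Finset.prod_congr rfl fun p hp => ?_
  change (if _ then (1 - supportedRpow (fun p => p ≤ N ∧ p ∈ A) 1 p)⁻¹ else 1) = _
  by_cases hpp : p.Prime
  · rw [supportedRpow_prime _ _ hpp, supportedRpow_prime _ _ hpp]
    have := (Finset.mem_Icc.1 hp).2
    by_cases h : p ∈ A <;> simp [h, hpp, this]
  · simp [hpp]

theorem summable_mul_comp_of_bound {w y : ℕ → ℝ} (hw : ∀ n, 0 ≤ w n) (hs : Summable w)
    (hy : ∀ n, y n ∈ Set.Icc (0 : ℝ) 1) {g : ℝ → ℝ} {B : ℝ}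
    (hg : ∀ t ∈ Set.Icc (0 : ℝ) 1, ‖g t‖ ≤ B) : Summable fun n => w n * g (y n) := by
  refine Summable.of_norm_bounded (hs.mul_right B) fun n => ?_
  rw [norm_mul, Real.norm_of_nonneg (hw n)]
  exact mul_le_mul_of_nonneg_left (hg _ (hy n)) (hw n)

theorem summable_mul_comp_of_continuous {w y : ℕ → ℝ} (hw : ∀ n, 0 ≤ w n) (hs : Summable w)
    (hy : ∀ n, y n ∈ Set.Icc (0 : ℝ) 1) {g : ℝ → ℝ} (hg : Continuous g) :
    Summable fun n => w n * g (y n) := by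
  obtain ⟨B, hB⟩ := isCompact_Icc.exists_bound_of_continuousOn (s := Set.Icc (0 : ℝ) 1)
    hg.continuousOn
  exact summable_mul_comp_of_bound hw hs hy hB

theorem integrable_of_ae_mem_Icc {ν : MeasureTheory.Measure ℝ} [MeasureTheory.IsFiniteMeasure ν]
    (hν : ∀ᵐ t ∂ν, t ∈ Set.Icc (0 : ℝ) 1) {g : ℝ → ℝ} (hg : Continuous g) :
    MeasureTheory.Integrable g ν := by
  obtain ⟨B, hB⟩ := isCompact_Icc.exists_bound_of_continuousOn (s := Set.Icc (0 : ℝ) 1)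
    hg.continuousOn
  exact MeasureTheory.Integrable.of_bound hg.aestronglyMeasurable B (hν.mono fun t ht => hB t ht)

/-- Convergence of moments of discrete probability measures on `[0, 1]` implies weak
convergence. -/
theorem tendsto_tsum_mul_comp_of_moments {ι : Type*} {l : Filter ι} {w y : ι → ℕ → ℝ}
    {ν : MeasureTheory.Measure ℝ} [MeasureTheory.IsProbabilityMeasure ν]
    (hν : ∀ᵐ t ∂ν, t ∈ Set.Icc (0 : ℝ) 1)
    (hw : ∀ᶠ i in l, (∀ n, 0 ≤ w i n) ∧ HasSum (w i) 1 ∧ ∀ n, y i n ∈ Set.Icc (0 : ℝ) 1)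
    (hm : ∀ k : ℕ, Tendsto (fun i => ∑' n, w i n * y i n ^ k) l (nhds (∫ t, t ^ k ∂ν)))
    {f : ℝ → ℝ} (hf : Continuous f) :
    Tendsto (fun i => ∑' n, w i n * f (y i n)) l (nhds (∫ t, f t ∂ν)) := by
  have poly : ∀ p : Polynomial ℝ,
      Tendsto (fun i => ∑' n, w i n * p.eval (y i n)) l (nhds (∫ t, p.eval t ∂ν)) := by
    intro p
    induction p using Polynomial.induction_on' with
    | add p q hp hq =>
      simp only [Polynomial.eval_add]
      rw [MeasureTheory.integral_add (integrable_of_ae_mem_Icc hν p.continuous)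
        (integrable_of_ae_mem_Icc hν q.continuous)]
      refine (hp.add hq).congr' ?_
      filter_upwards [hw] with i hi
      simp only [mul_add]
      rw [(summable_mul_comp_of_continuous hi.1 hi.2.1.summable hi.2.2 p.continuous).tsum_add
        (summable_mul_comp_of_continuous hi.1 hi.2.1.summable hi.2.2 q.continuous)]
    | monomial k a =>
      simp only [Polynomial.eval_monomial]
      rw [MeasureTheory.integral_const_mul]
      refine ((hm k).const_mul a).congr fun i => ?_
      rw [← tsum_mul_left]
      exact tsum_congr fun n => by ring
  rw [Metric.tendsto_nhds]
  intro ε hε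
  obtain ⟨p, hp⟩ := exists_polynomial_near_of_continuousOn 0 1 f hf.continuousOn (ε / 4)
    (by positivity)
  filter_upwards [hw, (Metric.tendsto_nhds.1 (poly p)) (ε / 4) (by positivity)] with i hi hpi
  have hsf := summable_mul_comp_of_continuous hi.1 hi.2.1.summable hi.2.2 hf
  have hsp := summable_mul_comp_of_continuous hi.1 hi.2.1.summable hi.2.2 p.continuous
  have h1 : |∑' n, w i n * p.eval (y i n) - ∑' n, w i n * f (y i n)| ≤ ε / 4 := by
    rw [← hsp.tsum_sub hsf]
    have hb : HasSum (fun n => w i n * (ε / 4)) (1 * (ε / 4)) := hi.2.1.mul_right _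
    rw [one_mul] at hb
    rw [← Real.norm_eq_abs]
    refine tsum_of_norm_bounded hb fun n => ?_
    rw [← mul_sub, norm_mul, Real.norm_of_nonneg (hi.1 n)]
    exact mul_le_mul_of_nonneg_left (hp _ (hi.2.2 n)).le (hi.1 n)
  have h2 : |∫ t, p.eval t ∂ν - ∫ t, f t ∂ν| ≤ ε / 4 := by
    rw [← MeasureTheory.integral_sub (integrable_of_ae_mem_Icc hν p.continuous)
      (integrable_of_ae_mem_Icc hν hf), ← Real.norm_eq_abs]
    have := MeasureTheory.norm_integral_le_of_norm_le_const (μ := ν)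
      (f := fun t => p.eval t - f t) (C := ε / 4) (hν.mono fun t ht => (hp t ht).le)
    simpa using this
  rw [Real.dist_eq] at hpi ⊢
  rw [abs_le] at h1 h2
  rw [abs_lt] at hpi ⊢
  constructor <;> linarith

theorem tendsto_tsum_mul_comp_of_squeeze {ι : Type*} {l : Filter ι} {w y : ι → ℕ → ℝ}
    {ν : MeasureTheory.Measure ℝ} [MeasureTheory.IsProbabilityMeasure ν]
    (hν : ∀ᵐ t ∂ν, t ∈ Set.Icc (0 : ℝ) 1)
    (hw : ∀ᶠ i in l, (∀ n, 0 ≤ w i n) ∧ HasSum (w i) 1 ∧ ∀ n, y i n ∈ Set.Icc (0 : ℝ) 1)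
    (hm : ∀ k : ℕ, Tendsto (fun i => ∑' n, w i n * y i n ^ k) l (nhds (∫ t, t ^ k ∂ν)))
    {f : ℝ → ℝ} {B c : ℝ} (hfB : ∀ t ∈ Set.Icc (0 : ℝ) 1, ‖f t‖ ≤ B) {g h : ℕ → ℝ → ℝ}
    (hg : ∀ m, Continuous (g m)) (hh : ∀ m, Continuous (h m))
    (hgf : ∀ m, ∀ t ∈ Set.Icc (0 : ℝ) 1, g m t ≤ f t)
    (hfh : ∀ m, ∀ t ∈ Set.Icc (0 : ℝ) 1, f t ≤ h m t)
    (hgc : Tendsto (fun m => ∫ t, g m t ∂ν) atTop (nhds c))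
    (hhc : Tendsto (fun m => ∫ t, h m t ∂ν) atTop (nhds c)) :
    Tendsto (fun i => ∑' n, w i n * f (y i n)) l (nhds c) := by
  rw [tendsto_order]
  constructor
  · intro a ha
    obtain ⟨m, hm'⟩ := (hgc.eventually (lt_mem_nhds ha)).exists
    filter_upwards [hw, (tendsto_tsum_mul_comp_of_moments hν hw hm (hg m)).eventually
      (lt_mem_nhds hm')] with i hi hlt
    refine hlt.trans_le (Summable.tsum_le_tsum (fun n => ?_)
      (summable_mul_comp_of_continuous hi.1 hi.2.1.summable hi.2.2 (hg m))
      (summable_mul_comp_of_bound hi.1 hi.2.1.summable hi.2.2 hfB))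
    exact mul_le_mul_of_nonneg_left (hgf m _ (hi.2.2 n)) (hi.1 n)
  · intro a ha
    obtain ⟨m, hm'⟩ := (hhc.eventually (gt_mem_nhds ha)).exists
    filter_upwards [hw, (tendsto_tsum_mul_comp_of_moments hν hw hm (hh m)).eventually
      (gt_mem_nhds hm')] with i hi hlt
    refine lt_of_le_of_lt (Summable.tsum_le_tsum (fun n => ?_)
      (summable_mul_comp_of_bound hi.1 hi.2.1.summable hi.2.2 hfB)
      (summable_mul_comp_of_continuous hi.1 hi.2.1.summable hi.2.2 (hh m))) hlt
    exact mul_le_mul_of_nonneg_left (hfh m _ (hi.2.2 n)) (hi.1 n)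

/-- The law of `exp (-V)`, where `V` is gamma distributed with shape `θ` and rate `1`. -/
noncomputable def expNegGamma (θ : ℝ) : MeasureTheory.Measure ℝ :=
  (ProbabilityTheory.gammaMeasure θ 1).map fun v => Real.exp (-v)

theorem measurable_exp_neg : Measurable fun v : ℝ => Real.exp (-v) := by fun_prop

theorem measurable_gammaPDF_one (θ : ℝ) : Measurable (ProbabilityTheory.gammaPDF θ 1) :=
  (ProbabilityTheory.measurable_gammaPDFReal θ 1).ennreal_ofReal

theorem isProbabilityMeasure_expNegGamma {θ : ℝ} (hθ : 0 < θ) :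
    MeasureTheory.IsProbabilityMeasure (expNegGamma θ) := by
  have := ProbabilityTheory.isProbabilityMeasure_gammaMeasure hθ one_pos
  exact MeasureTheory.Measure.isProbabilityMeasure_map measurable_exp_neg.aemeasurable

theorem integral_expNegGamma {θ : ℝ} (hθ : 0 < θ) {f : ℝ → ℝ} (hf : Measurable f) :
    ∫ t, f t ∂(expNegGamma θ) =
      (Real.Gamma θ)⁻¹ * ∫ v in Set.Ioi (0 : ℝ),
        v ^ (θ - 1) * Real.exp (-v) * f (Real.exp (-v)) := by
  rw [expNegGamma, MeasureTheory.integral_map measurable_exp_neg.aemeasurable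
    hf.aestronglyMeasurable, ProbabilityTheory.gammaMeasure,
    integral_withDensity_eq_integral_toReal_smul
      (measurable_gammaPDF_one θ)
      (MeasureTheory.ae_of_all _ fun _ => ENNReal.ofReal_lt_top),
    ← MeasureTheory.integral_const_mul, ← MeasureTheory.integral_Ici_eq_integral_Ioi,
    ← MeasureTheory.integral_indicator measurableSet_Ici]
  refine MeasureTheory.integral_congr_ae (MeasureTheory.ae_of_all _ fun v => ?_)
  simp only [ProbabilityTheory.gammaPDF, smul_eq_mul, Set.indicator_apply, Set.mem_Ici]
  rw [ENNReal.toReal_ofReal (ProbabilityTheory.gammaPDFReal_nonneg hθ one_pos v)]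
  simp only [ProbabilityTheory.gammaPDFReal]
  split_ifs
  · simp only [Real.one_rpow, one_mul]; ring
  · simp

theorem ae_expNegGamma_mem_Icc (θ : ℝ) : ∀ᵐ t ∂(expNegGamma θ), t ∈ Set.Icc (0 : ℝ) 1 := by
  refine (MeasureTheory.ae_map_iff measurable_exp_neg.aemeasurable measurableSet_Icc).mpr ?_
  rw [ProbabilityTheory.gammaMeasure, MeasureTheory.ae_withDensity_iff
      (measurable_gammaPDF_one θ)]
  refine MeasureTheory.ae_of_all _ fun v hv => ⟨(Real.exp_pos _).le, ?_⟩
  rw [Real.exp_le_one_iff, neg_nonpos]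
  by_contra h
  exact hv (ProbabilityTheory.gammaPDF_of_neg (not_le.mp h))

theorem ae_expNegGamma_ne (θ : ℝ) : ∀ᵐ t ∂(expNegGamma θ), t ≠ Real.exp (-1) := by
  refine (MeasureTheory.ae_map_iff measurable_exp_neg.aemeasurable
    (measurableSet_singleton _).compl).mpr ?_
  have h : ∀ᵐ v ∂(MeasureTheory.volume : MeasureTheory.Measure ℝ), v ≠ 1 := by
    rw [MeasureTheory.ae_iff]; simp
  filter_upwards [(MeasureTheory.withDensity_absolutelyContinuous _ _).ae_le h] with v hv hv'
  exact hv (by simpa using Real.exp_injective hv')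

theorem integral_pow_expNegGamma {θ : ℝ} (hθ : 0 < θ) (k : ℕ) :
    ∫ t, t ^ k ∂(expNegGamma θ) = ((k : ℝ) + 1) ^ (-θ) := by
  rw [integral_expNegGamma hθ (by fun_prop)]
  have h : ∀ v : ℝ, v ^ (θ - 1) * Real.exp (-v) * Real.exp (-v) ^ k =
      v ^ (θ - 1) * Real.exp (-(((k : ℝ) + 1) * v)) := fun v => by
    rw [← Real.exp_nat_mul, mul_assoc, ← Real.exp_add]
    ring_nf
  simp_rw [h]
  have hk : (0 : ℝ) < k + 1 := by positivity
  rw [Real.integral_rpow_mul_exp_neg_mul_Ioi hθ hk, Real.rpow_neg hk.le, one_div,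
    Real.inv_rpow hk.le]
  field_simp [(Real.Gamma_pos_of_pos hθ).ne']

/-- The test function `y ↦ y⁻¹` cut off to `[e⁻¹, ∞)`. -/
noncomputable def cutInv (y : ℝ) : ℝ := if Real.exp (-1) ≤ y then y⁻¹ else 0

theorem measurable_cutInv : Measurable cutInv :=
  Measurable.ite measurableSet_Ici measurable_inv measurable_const

theorem integral_cutInv_expNegGamma {θ : ℝ} (hθ : 0 < θ) :
    ∫ t, cutInv t ∂(expNegGamma θ) = (Real.Gamma (θ + 1))⁻¹ := by
  rw [integral_expNegGamma hθ measurable_cutInv]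
  have h : ∀ v : ℝ, v ^ (θ - 1) * Real.exp (-v) * cutInv (Real.exp (-v)) =
      (Set.Iic (1 : ℝ)).indicator (fun v => v ^ (θ - 1)) v := fun v => by
    simp only [cutInv, Real.exp_le_exp, neg_le_neg_iff, Set.indicator_apply, Set.mem_Iic]
    split_ifs
    · rw [mul_assoc, mul_inv_cancel₀ (Real.exp_pos _).ne', mul_one]
    · simp
  simp_rw [h]
  rw [MeasureTheory.setIntegral_indicator measurableSet_Iic, Set.Ioi_inter_Iic,
    ← intervalIntegral.integral_of_le zero_le_one, integral_rpow (Or.inl (by linarith)),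
    Real.Gamma_add_one hθ.ne']
  simp [hθ.ne']

/-- Continuous approximations of `cutInv`. -/
noncomputable def rampInv (a : ℝ) (m : ℕ) (y : ℝ) : ℝ :=
  (max y (Real.exp (-1)))⁻¹ * max 0 (min 1 ((y - Real.exp (-1)) * m + a))

theorem continuous_rampInv (a : ℝ) (m : ℕ) : Continuous (rampInv a m) := by
  have h : ∀ y, max y (Real.exp (-1)) ≠ 0 := fun y =>
    (lt_max_of_lt_right (Real.exp_pos _)).ne'
  unfold rampInv
  fun_prop (disch := exact h _)

theorem rampInv_nonneg (a : ℝ) (m : ℕ) (y : ℝ) : 0 ≤ rampInv a m y :=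
  mul_nonneg (inv_nonneg.mpr (le_max_of_le_right (Real.exp_pos _).le)) (le_max_left _ _)

theorem rampInv_le (a : ℝ) (m : ℕ) (y : ℝ) : rampInv a m y ≤ Real.exp 1 := by
  have h1 : (max y (Real.exp (-1)))⁻¹ ≤ Real.exp 1 := by
    rw [show Real.exp 1 = (Real.exp (-1))⁻¹ by rw [Real.exp_neg, inv_inv]]
    exact inv_anti₀ (Real.exp_pos _) (le_max_right _ _)
  calc rampInv a m y ≤ Real.exp 1 * 1 :=
        mul_le_mul h1 (max_le zero_le_one (min_le_left _ _)) (le_max_left _ _) (Real.exp_pos _).le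
    _ = _ := mul_one _

theorem rampInv_zero_le_cutInv (m : ℕ) (y : ℝ) : rampInv 0 m y ≤ cutInv y := by
  rw [rampInv, cutInv]
  split_ifs with h
  · rw [max_eq_left h]
    exact mul_le_of_le_one_right (inv_nonneg.mpr ((Real.exp_pos _).le.trans h))
      (max_le zero_le_one (min_le_left _ _))
  · rw [max_eq_left (a := (0 : ℝ))]
    · simp
    · refine min_le_of_right_le ?_
      rw [add_zero]
      exact mul_nonpos_of_nonpos_of_nonneg (by linarith [not_le.mp h]) m.cast_nonneg

theorem cutInv_le_rampInv_one (m : ℕ) (y : ℝ) : cutInv y ≤ rampInv 1 m y := by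
  by_cases h : Real.exp (-1) ≤ y
  · have h2 : 0 ≤ (y - Real.exp (-1)) * m := mul_nonneg (by linarith) m.cast_nonneg
    rw [cutInv, if_pos h, rampInv, max_eq_left h, min_eq_left (by linarith),
      max_eq_right zero_le_one, mul_one]
  · rw [cutInv, if_neg h]
    exact rampInv_nonneg _ _ _

theorem tendsto_rampInv (a : ℝ) {y : ℝ} (hy : y ≠ Real.exp (-1)) :
    Tendsto (fun m => rampInv a m y) atTop (nhds (cutInv y)) := by
  refine tendsto_const_nhds.congr' ?_
  rcases hy.lt_or_gt with h | h
  · have h1 : Tendsto (fun m : ℕ => (y - Real.exp (-1)) * m + a) atTop atBot :=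
      tendsto_atBot_add_const_right _ _
        (tendsto_natCast_atTop_atTop.const_mul_atTop_of_neg (by linarith))
    filter_upwards [h1.eventually_le_atBot 0] with m hm
    rw [cutInv, if_neg (not_le.mpr h), rampInv, max_eq_left (min_le_of_right_le hm), mul_zero]
  · have h1 : Tendsto (fun m : ℕ => (y - Real.exp (-1)) * m + a) atTop atTop :=
      tendsto_atTop_add_const_right _ _
        (tendsto_natCast_atTop_atTop.const_mul_atTop (by linarith))
    filter_upwards [h1.eventually_ge_atTop 1] with m hm
    rw [cutInv, if_pos h.le, rampInv, max_eq_left h.le, min_eq_left hm,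
      max_eq_right zero_le_one, mul_one]

theorem tendsto_integral_rampInv {θ : ℝ} (hθ : 0 < θ) (a : ℝ) :
    Tendsto (fun m => ∫ t, rampInv a m t ∂(expNegGamma θ)) atTop
      (nhds (Real.Gamma (θ + 1))⁻¹) := by
  have := isProbabilityMeasure_expNegGamma hθ
  rw [← integral_cutInv_expNegGamma hθ]
  refine MeasureTheory.tendsto_integral_of_dominated_convergence (fun _ => Real.exp 1)
    (fun m => (continuous_rampInv a m).aestronglyMeasurable) (MeasureTheory.integrable_const _)
    (fun m => MeasureTheory.ae_of_all _ fun t => ?_) ?_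
  · rw [Real.norm_of_nonneg (rampInv_nonneg _ _ _)]
    exact rampInv_le a m t
  · filter_upwards [ae_expNegGamma_ne θ] with t ht using tendsto_rampInv a ht

/-- Karamata's Tauberian theorem for Dirichlet series with nonnegative coefficients. -/
theorem tendsto_sum_div_tsum_rpow {b : ℕ → ℝ} {U : ℝ → ℝ} {θ : ℝ} (hθ : 0 < θ)
    (hb : ∀ n, 0 ≤ b n) (hb0 : b 0 = 0)
    (hU : ∀ x, 0 < x → 0 < U x ∧ HasSum (fun n : ℕ => b n * (n : ℝ) ^ (-x⁻¹)) (U x))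
    (hlim : ∀ k : ℕ, Tendsto (fun x => U (x / (k + 1)) / U x) atTop
      (nhds (((k : ℝ) + 1) ^ (-θ)))) :
    Tendsto (fun N : ℕ => (∑ n ∈ Finset.Icc 1 N, b n) / U (Real.log N)) atTop
      (nhds (Real.Gamma (θ + 1))⁻¹) := by
  have := isProbabilityMeasure_expNegGamma hθ
  have hrpow : ∀ x : ℝ, 0 < x → ∀ n : ℕ, ∀ k : ℕ,
      (n : ℝ) ^ (-x⁻¹) * ((n : ℝ) ^ (-x⁻¹)) ^ k = (n : ℝ) ^ (-(x / (k + 1))⁻¹) := by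
    intro x hx n k
    rw [← pow_succ', ← Real.rpow_mul_natCast n.cast_nonneg]
    congr 1
    push_cast
    field_simp
  have key : Tendsto (fun x : ℝ => ∑' n : ℕ, b n * (n : ℝ) ^ (-x⁻¹) / U x *
      cutInv ((n : ℝ) ^ (-x⁻¹))) atTop (nhds (Real.Gamma (θ + 1))⁻¹) := by
    refine tendsto_tsum_mul_comp_of_squeeze (ae_expNegGamma_mem_Icc θ) ?_ ?_
      (B := Real.exp 1) ?_ (continuous_rampInv 0) (continuous_rampInv 1)
      (fun m t _ => rampInv_zero_le_cutInv m t) (fun m t _ => cutInv_le_rampInv_one m t)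
      (tendsto_integral_rampInv hθ 0) (tendsto_integral_rampInv hθ 1)
    · filter_upwards [eventually_gt_atTop 0] with x hx
      obtain ⟨hpos, hsum⟩ := hU x hx
      refine ⟨fun n => div_nonneg (mul_nonneg (hb n) (Real.rpow_nonneg n.cast_nonneg _)) hpos.le,
        ?_, fun n => ⟨Real.rpow_nonneg n.cast_nonneg _, ?_⟩⟩
      · simpa [hpos.ne'] using hsum.div_const (U x)
      · rcases Nat.eq_zero_or_pos n with rfl | hn
        · rw [Nat.cast_zero, Real.zero_rpow (by simp [hx.ne'])]
          exact zero_le_one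
        · exact Real.rpow_le_one_of_one_le_of_nonpos (by exact_mod_cast hn) (by simp [hx.le])
    · intro k
      rw [integral_pow_expNegGamma hθ]
      refine (hlim k).congr' ?_
      filter_upwards [eventually_gt_atTop 0] with x hx
      rw [← ((hU (x / (k + 1)) (by positivity)).2.div_const (U x)).tsum_eq]
      refine tsum_congr fun n => ?_
      rw [← hrpow x hx n k]
      ring
    · intro t ht
      rw [Real.norm_of_nonneg ((rampInv_nonneg 0 0 t).trans (rampInv_zero_le_cutInv 0 t))]
      exact (cutInv_le_rampInv_one 0 t).trans (rampInv_le 1 0 t)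
  refine (key.comp (Real.tendsto_log_atTop.comp tendsto_natCast_atTop_atTop)).congr' ?_
  filter_upwards [eventually_gt_atTop 1] with N hN
  have hN1 : (1 : ℝ) < N := by exact_mod_cast hN
  have hlog : 0 < Real.log N := Real.log_pos hN1
  simp only [Function.comp_apply]
  rw [Finset.sum_div, tsum_eq_sum (s := Finset.Icc 1 N)]
  · refine Finset.sum_congr rfl fun n hn => ?_
    rw [Finset.mem_Icc] at hn
    have hn0 : (0 : ℝ) < n := by exact_mod_cast hn.1
    have hle : Real.exp (-1) ≤ (n : ℝ) ^ (-(Real.log N)⁻¹) := by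
      rw [Real.rpow_def_of_pos hn0, Real.exp_le_exp, mul_neg, neg_le_neg_iff, ← div_eq_mul_inv,
        div_le_one hlog]
      exact Real.log_le_log hn0 (by exact_mod_cast hn.2)
    rw [cutInv, if_pos hle, div_mul_eq_mul_div, mul_assoc,
      mul_inv_cancel₀ (Real.rpow_pos_of_pos hn0 _).ne', mul_one]
  · intro n hn
    rcases Nat.eq_zero_or_pos n with rfl | hn1
    · simp [hb0]
    · have hn2 : N < n := by
        by_contra h
        exact hn (Finset.mem_Icc.mpr ⟨hn1, not_lt.mp h⟩)
      have hn0 : (0 : ℝ) < n := by exact_mod_cast hn1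
      have hlt : ¬ Real.exp (-1) ≤ (n : ℝ) ^ (-(Real.log N)⁻¹) := by
        rw [Real.rpow_def_of_pos hn0, Real.exp_le_exp, mul_neg, neg_le_neg_iff, ← div_eq_mul_inv,
          div_le_one hlog, not_le]
        exact Real.log_lt_log (by linarith) (by exact_mod_cast hn2)
      rw [cutInv, if_neg hlt, mul_zero]

theorem tendsto_log_tsum_supportedRpow_sub {A : Set ℕ} (hA : ∀ p ∈ A, Nat.Prime p) {θ : ℝ}
    (hlog : ∀ v : ℝ, 0 < v →
      Tendsto (fun x => recipSum A (v * x) - recipSum A x) atTop (nhds (θ * Real.log v))) :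
    Tendsto (fun x => Real.log (∑' n, supportedRpow (· ∈ A) (1 + x⁻¹) n) - recipSum A x) atTop
      (nhds (-(Real.eulerMascheroniConstant * θ) +
        ∑' p : ℕ, logRemainder (if p ∈ A then (p : ℝ) ^ (-(1 : ℝ)) else 0))) := by
  refine ((tendsto_tsum_rpow_sub_recipSum hA hlog).add (tendsto_tsum_logRemainder hA)).congr' ?_
  filter_upwards [eventually_gt_atTop 0] with x hx
  rw [log_tsum_supportedRpow hA (by simpa using hx)]
  ring

theorem tendsto_tsum_supportedRpow_div {A : Set ℕ} (hA : ∀ p ∈ A, Nat.Prime p) {θ : ℝ}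
    (hlog : ∀ v : ℝ, 0 < v →
      Tendsto (fun x => recipSum A (v * x) - recipSum A x) atTop (nhds (θ * Real.log v)))
    {v : ℝ} (hv : 0 < v) :
    Tendsto (fun x => (∑' n, supportedRpow (· ∈ A) (1 + (v * x)⁻¹) n) /
      ∑' n, supportedRpow (· ∈ A) (1 + x⁻¹) n) atTop (nhds (v ^ θ)) := by
  have h := tendsto_log_tsum_supportedRpow_sub hA hlog
  have h2 := ((h.comp (tendsto_id.const_mul_atTop hv)).sub h).add (hlog v hv)
  rw [sub_self, zero_add] at h2
  rw [Real.rpow_def_of_pos hv, mul_comm (Real.log v)]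
  refine ((Real.continuous_exp.tendsto _).comp h2).congr' ?_
  filter_upwards [eventually_gt_atTop 0] with x hx
  have hpos : ∀ y : ℝ, 0 < y → 0 < ∑' n, supportedRpow (· ∈ A) (1 + y⁻¹) n := fun y hy =>
    one_pos.trans_le (one_le_tsum_supportedRpow _ (by simpa using hy))
  simp only [Function.comp_apply, id_eq]
  rw [← Real.exp_log (div_pos (hpos (v * x) (by positivity)) (hpos x hx)),
    Real.log_div (hpos (v * x) (by positivity)).ne' (hpos x hx).ne']
  congr 1
  ring

theorem tendsto_log_harmSum_sub {A : Set ℕ} (hA : ∀ p ∈ A, Nat.Prime p) :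
    Tendsto (fun N : ℕ => Real.log (harmSum fun p => p ≤ N ∧ p ∈ A) - recipSum A (Real.log N))
      atTop (nhds (∑' p : ℕ, logRemainder (if p ∈ A then (p : ℝ) ^ (-(1 : ℝ)) else 0))) := by
  have h := (summable_logRemainder hA le_rfl).hasSum.tendsto_sum_nat
  refine (h.comp (tendsto_add_atTop_nat 1)).congr' ?_
  filter_upwards [eventually_ge_atTop 1] with N hN
  have hN0 : (0 : ℝ) < N := by exact_mod_cast hN
  rw [harmSum_eq_prod, log_prod_prime_supportedRpow hA le_rfl, recipSum, Real.exp_log hN0,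
    Nat.floor_natCast]
  simp only [Function.comp_apply, Real.rpow_neg_one, one_div, add_sub_cancel_left,
    Nat.range_succ_eq_Icc_zero]

theorem harmSum_pos (A : Set ℕ) (N : ℕ) : 0 < harmSum fun p => p ≤ N ∧ p ∈ A := by
  rw [harmSum_eq_prod]
  refine Finset.prod_pos fun p hp => inv_pos.mpr (sub_pos.mpr ?_)
  have hp' := (Finset.mem_filter.mp hp).2
  rw [supportedRpow_prime _ _ hp']
  split_ifs
  · rw [Real.rpow_neg_one]
    exact (prime_inv_le_half hp').trans_lt (by norm_num)
  · exact one_pos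

theorem tendsto_harmSum_div {A : Set ℕ} (hA : ∀ p ∈ A, Nat.Prime p) {θ : ℝ}
    (hlog : ∀ v : ℝ, 0 < v →
      Tendsto (fun x => recipSum A (v * x) - recipSum A x) atTop (nhds (θ * Real.log v))) :
    Tendsto (fun N : ℕ => harmSum (fun p => p ≤ N ∧ p ∈ A) /
      ∑' n, supportedRpow (· ∈ A) (1 + (Real.log N)⁻¹) n) atTop
      (nhds (Real.exp (Real.eulerMascheroniConstant * θ))) := by
  have h := (tendsto_log_harmSum_sub hA).sub ((tendsto_log_tsum_supportedRpow_sub hA hlog).comp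
    (Real.tendsto_log_atTop.comp tendsto_natCast_atTop_atTop))
  rw [sub_add_cancel_right, neg_neg] at h
  refine ((Real.continuous_exp.tendsto _).comp h).congr' ?_
  filter_upwards [eventually_gt_atTop 1] with N hN
  have hpos : 0 < ∑' n, supportedRpow (· ∈ A) (1 + (Real.log N)⁻¹) n :=
    one_pos.trans_le (one_le_tsum_supportedRpow _
      (by simpa using Real.log_pos (by exact_mod_cast hN)))
  simp only [Function.comp_apply]
  rw [← Real.exp_log (div_pos (harmSum_pos A N) hpos),
    Real.log_div (harmSum_pos A N).ne' hpos.ne']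
  congr 1
  ring

/-- **Generalized Mertens formula (Theorem 1, part (i)).**
If `A` is a set of primes with natural density `θ ∈ (0,1]` within the primes, then the ratio
of the harmonic sum over integers whose prime factors are `≤ N` and lie in `A` to the harmonic
sum over integers `n ≤ N` whose prime factors lie in `A` tends to `e^{γθ} Γ(θ+1)`. -/
theorem generalized_mertens_i
    (A : Set ℕ) (hA : ∀ p ∈ A, Nat.Prime p)
    (θ : ℝ) (hθ : θ ∈ Set.Ioc (0 : ℝ) 1)
    (hdens : Tendsto
      (fun N : ℕ => ((A ∩ Set.Icc 1 N).ncard : ℝ) / (({p : ℕ | Nat.Prime p} ∩ Set.Icc 1 N).ncard : ℝ))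
      atTop (nhds θ)) :
    Tendsto
      (fun N : ℕ =>
        harmSum (fun p => p ≤ N ∧ p ∈ A) /
        ∑ n ∈ Finset.Icc 1 N,
          if ∀ p : ℕ, p.Prime → p ∣ n → p ∈ A then (1 : ℝ) / (n : ℝ) else 0)
      atTop
      (nhds (Real.exp (Real.eulerMascheroniConstant * θ) * Real.Gamma (θ + 1))) := by
  have hθ0 := hθ.1
  have hlog := fun (v : ℝ) (hv : 0 < v) => tendsto_recipSum_mul_sub hA hdens hv
  have hpos : ∀ y : ℝ, 0 < y → 0 < ∑' n, supportedRpow (· ∈ A) (1 + y⁻¹) n := fun y hy =>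
    one_pos.trans_le (one_le_tsum_supportedRpow _ (by simpa using hy))
  have hK := tendsto_sum_div_tsum_rpow (b := supportedRpow (· ∈ A) 1)
    (U := fun x => ∑' n, supportedRpow (· ∈ A) (1 + x⁻¹) n) hθ0 (supportedRpow_nonneg _ _)
    (map_zero _) (fun x hx => ⟨hpos x hx, ?_⟩) fun k => ?_
  · have hΓ := (Real.Gamma_pos_of_pos (show 0 < θ + 1 by linarith)).ne'
    have h := (tendsto_harmSum_div hA hlog).div hK (inv_ne_zero hΓ)
    rw [div_inv_eq_mul] at h
    refine h.congr' ?_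
    filter_upwards [eventually_gt_atTop 1] with N hN
    have hN' := hpos (Real.log N) (Real.log_pos (by exact_mod_cast hN))
    simp only [Pi.div_apply]
    rw [div_div_div_cancel_right₀ hN'.ne']
    congr 1
    refine Finset.sum_congr rfl fun n hn => ?_
    have hn0 : n ≠ 0 := Nat.one_le_iff_ne_zero.mp (Finset.mem_Icc.mp hn).1
    rw [supportedRpow_apply]
    simp only [hn0, ne_eq, not_false_eq_true, true_and, Real.rpow_neg_one, one_div]
  · have hs : (1 : ℝ) < 1 + x⁻¹ := by simpa using hx
    refine (summable_supportedRpow (· ∈ A) hs).hasSum.congr_fun fun n => ?_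
    simp only [supportedRpow_apply]
    split_ifs with h
    · rw [neg_add, Real.rpow_add (by exact_mod_cast Nat.pos_of_ne_zero h.1)]
    · rw [zero_mul]
  · have hk : (0 : ℝ) < k + 1 := by positivity
    have h := tendsto_tsum_supportedRpow_div hA hlog (inv_pos.mpr hk)
    rw [Real.inv_rpow hk.le, ← Real.rpow_neg hk.le] at h
    simpa only [div_eq_inv_mul] using h
end

section
/- Let k ≥ 2 and let A be a subset of the prime numbers whose natural density in the primes exists and equals θ ∈ (0,1]. Then the limit as N → ∞ of the ratio (∑_{k-free n ≥ 1 : every prime factor of n is ≤ N and lies in A} 1/n) / (∑_{k-free n with 1 ≤ n ≤ N : every prime factor of n lies in A} 1/n) equals e^{γθ} · Γ(θ+1). -/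
open Filter
open scoped Classical

/-- `n` is `k`-free: no `k`-th power of a prime divides `n`. -/
def KFree (k n : ℕ) : Prop := ∀ p : ℕ, p.Prime → ¬ p ^ k ∣ n

/-- The sum of `1/n` over `k`-free positive integers `n` all of whose prime factors lie in the
set described by the predicate `P`. -/
noncomputable def kfreeHarmSum (k : ℕ) (P : ℕ → Prop) : ℝ :=
  ∑' n : {n : ℕ // 0 < n ∧ (∀ p : ℕ, p.Prime → p ∣ n → P p) ∧ KFree k n},
    (1 : ℝ) / ((n : ℕ) : ℝ)

section

open Set MeasureTheory Topology

/-- The weighted point masses `w i n` at the points `x i n ∈ [0, 1]` have moments converging along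
`l` to those of the image under `u ↦ exp (-u)` of the density `g` on `(0, ∞)`. -/
structure MomentsTendsto {ι : Type*} (l : Filter ι) (w x : ι → ℕ → ℝ) (g : ℝ → ℝ) : Prop where
  weight_nonneg : ∀ᶠ i in l, ∀ n, 0 ≤ w i n
  point_mem : ∀ᶠ i in l, ∀ n, x i n ∈ Icc (0 : ℝ) 1
  summable : ∀ᶠ i in l, Summable (w i)
  density_nonneg : ∀ u ∈ Ioi (0 : ℝ), 0 ≤ g u
  integrable : IntegrableOn g (Ioi 0)
  tendsto_moment : ∀ j : ℕ, Tendsto (fun i => ∑' n, x i n ^ j * w i n) l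
    (𝓝 (∫ u in Ioi (0 : ℝ), Real.exp (-u) ^ j * g u))

lemma exp_neg_mem_Icc {u : ℝ} (hu : u ∈ Ioi (0 : ℝ)) : Real.exp (-u) ∈ Icc (0 : ℝ) 1 :=
  ⟨(Real.exp_pos _).le, Real.exp_le_one_iff.2 (by simpa using (mem_Ioi.1 hu).le)⟩

lemma summable_bounded_mul {w x : ℕ → ℝ} (hw : ∀ n, 0 ≤ w n) (hx : ∀ n, x n ∈ Icc (0 : ℝ) 1)
    (hs : Summable w) {φ : ℝ → ℝ} {C : ℝ} (hφ : ∀ y ∈ Icc (0 : ℝ) 1, |φ y| ≤ C) :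
    Summable (fun n => φ (x n) * w n) := by
  refine Summable.of_norm_bounded (hs.mul_left C) fun n => ?_
  rw [norm_mul, Real.norm_eq_abs, Real.norm_eq_abs, abs_of_nonneg (hw n)]
  exact mul_le_mul_of_nonneg_right (hφ _ (hx n)) (hw n)

lemma integrableOn_bounded_mul {g : ℝ → ℝ} (hg : IntegrableOn g (Ioi 0)) {φ : ℝ → ℝ}
    (hm : Measurable φ) {C : ℝ} (hφ : ∀ y ∈ Icc (0 : ℝ) 1, |φ y| ≤ C) :
    IntegrableOn (fun u => φ (Real.exp (-u)) * g u) (Ioi 0) := by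
  refine Integrable.bdd_mul (c := C) hg ?_ ?_
  · exact (hm.comp (by fun_prop)).aestronglyMeasurable
  · filter_upwards [ae_restrict_mem measurableSet_Ioi] with u hu
    exact hφ _ (exp_neg_mem_Icc hu)

lemma exists_bound_of_continuous {φ : ℝ → ℝ} (hφ : Continuous φ) :
    ∃ C, ∀ y ∈ Icc (0 : ℝ) 1, |φ y| ≤ C :=
  isCompact_Icc.exists_bound_of_continuousOn hφ.continuousOn

namespace MomentsTendsto

variable {ι : Type*} {l : Filter ι} {w x : ι → ℕ → ℝ} {g : ℝ → ℝ}

lemma tendsto_polynomial (h : MomentsTendsto l w x g) (p : Polynomial ℝ) :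
    Tendsto (fun i => ∑' n, p.eval (x i n) * w i n) l
      (𝓝 (∫ u in Ioi (0 : ℝ), p.eval (Real.exp (-u)) * g u)) := by
  have hI : ∫ u in Ioi (0 : ℝ), p.eval (Real.exp (-u)) * g u =
      ∑ j ∈ Finset.range (p.natDegree + 1),
        p.coeff j * ∫ u in Ioi (0 : ℝ), Real.exp (-u) ^ j * g u := by
    simp_rw [Polynomial.eval_eq_sum_range, Finset.sum_mul, mul_assoc]
    rw [integral_finsetSum]
    · simp_rw [integral_const_mul]
    · intro j _
      refine Integrable.const_mul ?_ _
      obtain ⟨C, hC⟩ := exists_bound_of_continuous (continuous_pow (M := ℝ) j)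
      exact integrableOn_bounded_mul h.integrable (continuous_pow j).measurable hC
  rw [hI]
  refine Tendsto.congr' ?_ (tendsto_finsetSum _ fun j _ => (h.tendsto_moment j).const_mul _)
  filter_upwards [h.weight_nonneg, h.point_mem, h.summable] with i hw hx hs
  simp_rw [Polynomial.eval_eq_sum_range, Finset.sum_mul, mul_assoc]
  rw [Summable.tsum_finsetSum]
  · simp_rw [tsum_mul_left]
  · intro j _
    refine Summable.mul_left _ ?_
    obtain ⟨C, hC⟩ := exists_bound_of_continuous (continuous_pow (M := ℝ) j)
    exact summable_bounded_mul hw hx hs hC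

lemma tendsto_weight (h : MomentsTendsto l w x g) :
    Tendsto (fun i => ∑' n, w i n) l (𝓝 (∫ u in Ioi (0 : ℝ), g u)) := by
  simpa using h.tendsto_moment 0

/-- Convergence of moments implies convergence for every continuous test function. -/
lemma tendsto_continuous (h : MomentsTendsto l w x g) {φ : ℝ → ℝ} (hφ : Continuous φ) :
    Tendsto (fun i => ∑' n, φ (x i n) * w i n) l
      (𝓝 (∫ u in Ioi (0 : ℝ), φ (Real.exp (-u)) * g u)) := by
  rw [Metric.tendsto_nhds]
  intro ε hε
  set G := ∫ u in Ioi (0 : ℝ), g u with hG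
  have hG0 : 0 ≤ G := setIntegral_nonneg measurableSet_Ioi h.density_nonneg
  obtain ⟨C, hC⟩ := exists_bound_of_continuous hφ
  set δ := ε / (2 * G + 3) with hδ
  have hδ0 : 0 < δ := by positivity
  obtain ⟨p, hp⟩ := exists_polynomial_near_of_continuousOn 0 1 φ hφ.continuousOn δ hδ0
  obtain ⟨D, hD⟩ := exists_bound_of_continuous p.continuous
  have hint : |∫ u in Ioi (0 : ℝ), p.eval (Real.exp (-u)) * g u -
      φ (Real.exp (-u)) * g u| ≤ δ * G := by
    rw [hG, ← integral_const_mul, ← Real.norm_eq_abs]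
    refine norm_integral_le_of_norm_le (h.integrable.const_mul δ) ?_
    filter_upwards [ae_restrict_mem measurableSet_Ioi] with u hu
    rw [← sub_mul, norm_mul, Real.norm_eq_abs, Real.norm_eq_abs,
      abs_of_nonneg (h.density_nonneg u hu)]
    exact mul_le_mul_of_nonneg_right (hp _ (exp_neg_mem_Icc hu)).le (h.density_nonneg u hu)
  rw [integral_sub (integrableOn_bounded_mul h.integrable p.continuous.measurable hD)
    (integrableOn_bounded_mul h.integrable hφ.measurable hC)] at hint
  filter_upwards [h.weight_nonneg, h.point_mem, h.summable,
    Metric.tendsto_nhds.1 (h.tendsto_polynomial p) δ hδ0,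
    h.tendsto_weight.eventually_lt_const (lt_add_one G)] with i hw hx hs hp' hW
  have hsum : |∑' n, (p.eval (x i n) * w i n - φ (x i n) * w i n)| ≤ δ * ∑' n, w i n := by
    rw [← tsum_mul_left, ← Real.norm_eq_abs]
    refine tsum_of_norm_bounded (hs.mul_left δ).hasSum fun n => ?_
    rw [← sub_mul, norm_mul, Real.norm_eq_abs, Real.norm_eq_abs, abs_of_nonneg (hw n)]
    exact mul_le_mul_of_nonneg_right (hp _ (hx n)).le (hw n)
  rw [(summable_bounded_mul hw hx hs hD).tsum_sub (summable_bounded_mul hw hx hs hC)] at hsum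
  rw [Real.dist_eq] at hp' ⊢
  have h1 : δ * ∑' n, w i n ≤ δ * (G + 1) := by gcongr
  have h2 : ε = δ * (2 * G + 3) := by rw [hδ]; field_simp
  rw [abs_le] at hint hsum
  rw [abs_lt] at hp' ⊢
  constructor <;> nlinarith

/-- Convergence of moments implies convergence for a nonnegative continuous test function
cut off below a point `a`. -/
lemma tendsto_indicator (h : MomentsTendsto l w x g) {c : ℝ → ℝ} (hc : Continuous c)
    (hc0 : ∀ y, 0 ≤ c y) (a : ℝ) :
    Tendsto (fun i => ∑' n, (Ici a).indicator c (x i n) * w i n) l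
      (𝓝 (∫ u in Ioi (0 : ℝ), (Ici a).indicator c (Real.exp (-u)) * g u)) := by
  let r (t : ℝ) (m : ℕ) (y : ℝ) : ℝ := max 0 (min 1 (t + (m + 1) * (y - a))) * c y
  have hr (t : ℝ) (m : ℕ) : Continuous (r t m) := by fun_prop
  have hrc (t : ℝ) (m : ℕ) (y : ℝ) : 0 ≤ r t m y ∧ r t m y ≤ c y := by
    refine ⟨mul_nonneg (le_max_left _ _) (hc0 y), mul_le_of_le_one_left (hc0 y) ?_⟩
    exact max_le zero_le_one (min_le_left _ _)
  have hlow (m : ℕ) (y : ℝ) : r 0 m y ≤ (Ici a).indicator c y := by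
    by_cases hy : a ≤ y
    · simpa [hy] using (hrc 0 m y).2
    · have : (m + 1 : ℝ) * (y - a) ≤ 0 :=
        mul_nonpos_of_nonneg_of_nonpos (by positivity) (by linarith)
      simp [hy, r, this]
  have hupp (m : ℕ) (y : ℝ) : (Ici a).indicator c y ≤ r 1 m y := by
    by_cases hy : a ≤ y
    · have : 0 ≤ (m + 1 : ℝ) * (y - a) := mul_nonneg (by positivity) (by linarith)
      simp [hy, r, this]
    · simpa [hy] using (hrc 1 m y).1
  obtain ⟨C, hC⟩ := exists_bound_of_continuous hc
  have hcC (y : ℝ) (hy : y ∈ Icc (0 : ℝ) 1) : c y ≤ C := (le_abs_self _).trans (hC y hy)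
  have hrC (t : ℝ) (m : ℕ) : ∀ y ∈ Icc (0 : ℝ) 1, |r t m y| ≤ C := fun y hy => by
    rw [abs_of_nonneg (hrc t m y).1]; exact (hrc t m y).2.trans (hcC y hy)
  have hiC : ∀ y ∈ Icc (0 : ℝ) 1, |(Ici a).indicator c y| ≤ C := fun y hy => by
    rw [abs_of_nonneg (indicator_nonneg (fun y _ => hc0 y) y)]
    exact (indicator_le_self' (fun y _ => hc0 y) y).trans (hcC y hy)
  have him : Measurable ((Ici a).indicator c) := hc.measurable.indicator measurableSet_Ici
  have hlim (t : ℝ) : Tendsto (fun m : ℕ => ∫ u in Ioi (0 : ℝ), r t m (Real.exp (-u)) * g u) atTop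
      (𝓝 (∫ u in Ioi (0 : ℝ), (Ici a).indicator c (Real.exp (-u)) * g u)) := by
    refine tendsto_integral_of_dominated_convergence (fun u => C * g u) (fun m => ?_)
      (h.integrable.const_mul C) (fun m => ?_) ?_
    · exact (integrableOn_bounded_mul h.integrable (hr t m).measurable (hrC t m)).1
    · filter_upwards [ae_restrict_mem measurableSet_Ioi] with u hu
      rw [norm_mul, Real.norm_eq_abs, Real.norm_eq_abs, abs_of_nonneg (h.density_nonneg u hu)]
      exact mul_le_mul_of_nonneg_right (hrC t m _ (exp_neg_mem_Icc hu)) (h.density_nonneg u hu)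
    · have hne : ∀ᵐ u : ℝ ∂(volume.restrict (Ioi 0)), u ≠ -Real.log a :=
        ae_restrict_of_ae (by simp [ae_iff, measure_singleton])
      filter_upwards [hne] with u hu
      refine Tendsto.mul_const _ ?_
      have hya : Real.exp (-u) ≠ a := fun he => hu (by rw [← he, Real.log_exp, neg_neg])
      have hm : Tendsto (fun m : ℕ => (m : ℝ) + 1) atTop atTop :=
        tendsto_atTop_add_const_right _ _ tendsto_natCast_atTop_atTop
      rcases lt_or_gt_of_ne hya with hlt | hgt
      · rw [indicator_of_notMem (by simpa using hlt)]
        refine tendsto_const_nhds.congr' ?_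
        have := tendsto_atBot_add_const_left atTop t
          (hm.atTop_mul_const_of_neg (sub_neg.2 hlt))
        filter_upwards [this.eventually_le_atBot 0] with m hm'
        simp [r, hm']
      · rw [indicator_of_mem (by simpa using hgt.le)]
        refine tendsto_const_nhds.congr' ?_
        have := tendsto_atTop_add_const_left atTop t
          (hm.atTop_mul_const (sub_pos.2 hgt))
        filter_upwards [this.eventually_ge_atTop 1] with m hm'
        simp [r, hm']
  have hle {φ ψ : ℝ → ℝ} (hφψ : ∀ y, φ y ≤ ψ y) (hφ : ∀ y ∈ Icc (0 : ℝ) 1, |φ y| ≤ C)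
      (hψ : ∀ y ∈ Icc (0 : ℝ) 1, |ψ y| ≤ C) :
      ∀ᶠ i in l, ∑' n, φ (x i n) * w i n ≤ ∑' n, ψ (x i n) * w i n := by
    filter_upwards [h.weight_nonneg, h.point_mem, h.summable] with i hw hx hs
    exact (summable_bounded_mul hw hx hs hφ).tsum_le_tsum
      (fun n => mul_le_mul_of_nonneg_right (hφψ _) (hw n)) (summable_bounded_mul hw hx hs hψ)
  rw [tendsto_order]
  refine ⟨fun b hb => ?_, fun b hb => ?_⟩
  · obtain ⟨m, hm⟩ := ((hlim 0).eventually_const_lt hb).exists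
    filter_upwards [(h.tendsto_continuous (hr 0 m)).eventually_const_lt hm,
      hle (hlow m) (hrC 0 m) hiC] with i h1 h2
    exact h1.trans_le h2
  · obtain ⟨m, hm⟩ := ((hlim 1).eventually_lt_const hb).exists
    filter_upwards [(h.tendsto_continuous (hr 1 m)).eventually_lt_const hm,
      hle (hupp m) hiC (hrC 1 m)] with i h1 h2
    exact h2.trans_lt h1

end MomentsTendsto

lemma one_sub_exp_neg_nonneg {u : ℝ} (hu : 0 < u) : 0 ≤ 1 - Real.exp (-u) :=
  sub_nonneg.2 (Real.exp_le_one_iff.2 (by linarith))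

lemma one_sub_exp_neg_div_le_one {u : ℝ} (hu : 0 < u) : (1 - Real.exp (-u)) / u ≤ 1 := by
  rw [div_le_one hu]
  linarith [Real.add_one_le_exp (-u)]

lemma integral_log_mul_exp_neg_Ioi :
    ∫ u in Ioi (0 : ℝ), Real.log u * Real.exp (-u) = -Real.eulerMascheroniConstant := by
  have h := Complex.hasDerivAt_GammaIntegral (s := 1) (by simp)
  have h' : HasDerivAt Complex.GammaIntegral (-(Real.eulerMascheroniConstant : ℂ)) 1 := by
    refine Complex.hasDerivAt_Gamma_one.congr_of_eventuallyEq ?_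
    filter_upwards [(isOpen_lt continuous_const Complex.continuous_re).mem_nhds
      (show (0 : ℝ) < (1 : ℂ).re by simp)] with s hs
    exact (Complex.Gamma_eq_integral hs).symm
  have he := h.unique h'
  simp only [sub_self, Complex.cpow_zero, one_mul] at he
  have : ((∫ u in Ioi (0 : ℝ), Real.log u * Real.exp (-u) : ℝ) : ℂ) =
      ((-Real.eulerMascheroniConstant : ℝ) : ℂ) := by
    rw [← integral_complex_ofReal]
    push_cast at he ⊢
    exact he
  exact_mod_cast this

lemma integrableOn_log_mul_exp_neg_Ioi :
    IntegrableOn (fun u => Real.log u * Real.exp (-u)) (Ioi (0 : ℝ)) := by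
  by_contra h
  have h0 := integral_undef h
  rw [integral_log_mul_exp_neg_Ioi] at h0
  linarith [Real.one_half_lt_eulerMascheroniConstant]

lemma integrableOn_one_sub_exp_neg_div :
    IntegrableOn (fun u => (1 - Real.exp (-u)) / u) (Ioc (0 : ℝ) 1) := by
  refine Integrable.mono' (g := fun _ => (1 : ℝ)) (by simp) ?_ ?_
  · exact (by fun_prop : Measurable fun u : ℝ => (1 - Real.exp (-u)) / u).aestronglyMeasurable
  · filter_upwards [ae_restrict_mem measurableSet_Ioc] with u hu
    rw [Real.norm_of_nonneg (div_nonneg (one_sub_exp_neg_nonneg hu.1) hu.1.le)]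
    exact one_sub_exp_neg_div_le_one hu.1

lemma integrableOn_exp_neg_div :
    IntegrableOn (fun u => Real.exp (-u) / u) (Ioi (1 : ℝ)) := by
  refine Integrable.mono' (integrableOn_exp_neg_Ioi 1) ?_ ?_
  · exact (by fun_prop : Measurable fun u : ℝ => Real.exp (-u) / u).aestronglyMeasurable
  · filter_upwards [ae_restrict_mem measurableSet_Ioi] with u hu
    have hu' : (1 : ℝ) < u := hu
    rw [Real.norm_of_nonneg (by positivity)]
    exact div_le_self (Real.exp_pos _).le hu'.le

lemma hasDerivAt_exp_neg (u : ℝ) : HasDerivAt (fun u => Real.exp (-u)) (-Real.exp (-u)) u := by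
  simpa using (hasDerivAt_neg u).exp

lemma continuousOn_one_sub_exp_neg_mul_log :
    ContinuousOn (fun u => (1 - Real.exp (-u)) * Real.log u) (Icc 0 1) := by
  intro u hu
  rcases hu.1.eq_or_lt with rfl | hu0
  · have hz : Tendsto (fun u => |u * Real.log u|) (𝓝[Icc 0 1] 0) (𝓝 0) := by
      simpa using (Real.continuous_mul_log.abs.tendsto 0).mono_left nhdsWithin_le_nhds
    simp only [ContinuousWithinAt, Real.log_zero, mul_zero]
    refine squeeze_zero_norm' ?_ hz
    filter_upwards [self_mem_nhdsWithin] with v hv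
    rw [norm_mul, abs_mul, Real.norm_eq_abs, Real.norm_eq_abs]
    refine mul_le_mul_of_nonneg_right ?_ (abs_nonneg _)
    rcases hv.1.eq_or_lt with rfl | hv0
    · simp
    · rw [abs_of_nonneg (one_sub_exp_neg_nonneg hv0), abs_of_pos hv0]
      linarith [Real.add_one_le_exp (-v)]
  · have : ContinuousAt Real.log u := Real.continuousAt_log hu0.ne'
    exact ContinuousAt.continuousWithinAt (by fun_prop)

lemma integral_one_sub_exp_neg_div :
    (∫ u in Ioc (0 : ℝ) 1, (1 - Real.exp (-u)) / u) =
      -∫ u in Ioc (0 : ℝ) 1, Real.log u * Real.exp (-u) := by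
  have hlog := integrableOn_log_mul_exp_neg_Ioi.mono_set (Ioc_subset_Ioi_self : Ioc (0 : ℝ) 1 ⊆ _)
  have hsum := hlog.add integrableOn_one_sub_exp_neg_div
  have h := intervalIntegral.integral_eq_sub_of_hasDerivAt_of_le zero_le_one
    continuousOn_one_sub_exp_neg_mul_log (f' := fun u => Real.log u * Real.exp (-u) +
      (1 - Real.exp (-u)) / u) (fun u hu => ?_)
    ((intervalIntegrable_iff_integrableOn_Ioc_of_le zero_le_one).2 hsum)
  · rw [intervalIntegral.integral_of_le zero_le_one,
      integral_add hlog integrableOn_one_sub_exp_neg_div] at h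
    simp only [Real.log_one, Real.log_zero, mul_zero, sub_zero] at h
    linarith
  · convert! ((hasDerivAt_exp_neg u).const_sub 1).mul (Real.hasDerivAt_log hu.1.ne') using 1
    ring

lemma tendsto_exp_neg_mul_log : Tendsto (fun u => -(Real.exp (-u) * Real.log u)) atTop (𝓝 0) := by
  rw [← neg_zero]
  refine Tendsto.neg (squeeze_zero' ?_ ?_ (Real.tendsto_pow_mul_exp_neg_atTop_nhds_zero 1))
  · filter_upwards [eventually_ge_atTop 1] with u hu
    exact mul_nonneg (Real.exp_pos _).le (Real.log_nonneg hu)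
  · filter_upwards [eventually_ge_atTop 1] with u hu
    rw [pow_one, mul_comm]
    exact mul_le_mul_of_nonneg_right
      ((Real.log_le_sub_one_of_pos (by linarith)).trans (by linarith)) (Real.exp_pos _).le

lemma integral_exp_neg_div :
    (∫ u in Ioi (1 : ℝ), Real.exp (-u) / u) = ∫ u in Ioi (1 : ℝ), Real.log u * Real.exp (-u) := by
  have hlog := integrableOn_log_mul_exp_neg_Ioi.mono_set (Ioi_subset_Ioi (zero_le_one (α := ℝ)))
  have h := integral_Ioi_of_hasDerivAt_of_tendsto' (a := (1 : ℝ))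
    (f := fun u => -(Real.exp (-u) * Real.log u))
    (f' := fun u => Real.log u * Real.exp (-u) - Real.exp (-u) / u) (m := 0) (fun u hu => ?_)
    (hlog.sub integrableOn_exp_neg_div) tendsto_exp_neg_mul_log
  · rw [integral_sub hlog integrableOn_exp_neg_div] at h
    simp only [Real.log_one, mul_zero, sub_zero, neg_zero] at h
    linarith
  · have hu' : (0 : ℝ) < u := zero_lt_one.trans_le hu
    convert! ((hasDerivAt_exp_neg u).mul (Real.hasDerivAt_log hu'.ne')).neg using 1
    ring

/-- An integral representation of the Euler–Mascheroni constant. -/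
lemma integral_one_sub_exp_neg_div_sub_integral_exp_neg_div :
    (∫ u in Ioc (0 : ℝ) 1, (1 - Real.exp (-u)) / u) - ∫ u in Ioi (1 : ℝ), Real.exp (-u) / u =
      Real.eulerMascheroniConstant := by
  have hlog := integrableOn_log_mul_exp_neg_Ioi
  have h := integral_log_mul_exp_neg_Ioi
  rw [← Ioc_union_Ioi_eq_Ioi (zero_le_one (α := ℝ)), setIntegral_union
    (Ioc_disjoint_Ioi le_rfl) measurableSet_Ioi (hlog.mono_set Ioc_subset_Ioi_self)
    (hlog.mono_set (Ioi_subset_Ioi zero_le_one))] at h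
  rw [integral_one_sub_exp_neg_div, integral_exp_neg_div]
  linarith

/-- The density `e⁻ᵘ (1 - e⁻ᵘ) / u`, whose moments are logarithms. -/
noncomputable def frullaniDensity (u : ℝ) : ℝ := Real.exp (-u) * ((1 - Real.exp (-u)) / u)

lemma frullaniDensity_nonneg {u : ℝ} (hu : u ∈ Ioi (0 : ℝ)) : 0 ≤ frullaniDensity u :=
  mul_nonneg (Real.exp_pos _).le (div_nonneg (one_sub_exp_neg_nonneg hu) (mem_Ioi.1 hu).le)

lemma measurable_frullaniDensity : Measurable frullaniDensity := by
  unfold frullaniDensity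
  fun_prop

lemma integrableOn_frullaniDensity : IntegrableOn frullaniDensity (Ioi 0) := by
  refine Integrable.mono' (integrableOn_exp_neg_Ioi 0)
    measurable_frullaniDensity.aestronglyMeasurable ?_
  filter_upwards [ae_restrict_mem measurableSet_Ioi] with u hu
  rw [Real.norm_of_nonneg (frullaniDensity_nonneg hu)]
  exact mul_le_of_le_one_right (Real.exp_pos _).le (one_sub_exp_neg_div_le_one hu)

lemma integral_exp_neg_pow_mul_frullaniDensity (j : ℕ) :
    ∫ u in Ioi (0 : ℝ), Real.exp (-u) ^ j * frullaniDensity u =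
      Real.log ((j + 2 : ℝ) / (j + 1 : ℝ)) := by
  have hfun : (fun u => Real.exp (-u) ^ j * frullaniDensity u) = fun u : ℝ =>
      u⁻¹ • ((fun v => Real.exp (-v)) ((j + 1 : ℝ) * u) -
        (fun v => Real.exp (-v)) ((j + 2 : ℝ) * u)) := by
    ext u
    have h1 : Real.exp (-((j + 1 : ℝ) * u)) = Real.exp (-u) ^ j * Real.exp (-u) := by
      rw [← Real.exp_nat_mul, ← Real.exp_add]; ring_nf
    have h2 : Real.exp (-((j + 2 : ℝ) * u)) =
        Real.exp (-u) ^ j * Real.exp (-u) * Real.exp (-u) := by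
      rw [← Real.exp_nat_mul, ← Real.exp_add, ← Real.exp_add]; ring_nf
    simp only [h1, h2, frullaniDensity, smul_eq_mul]
    ring
  obtain ⟨C, hC⟩ := exists_bound_of_continuous (continuous_pow (M := ℝ) j)
  have hint := integrableOn_bounded_mul integrableOn_frullaniDensity
    (continuous_pow j).measurable hC
  have hL : Tendsto (fun v : ℝ => Real.exp (-v)) (𝓝[>] 0) (𝓝 1) := by
    have : Continuous fun v : ℝ => Real.exp (-v) := by fun_prop
    simpa using (this.tendsto 0).mono_left nhdsWithin_le_nhds
  have hcont : Continuous fun v : ℝ => Real.exp (-v) := by fun_prop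
  rw [hfun] at hint ⊢
  rw [Frullani.integral_Ioi_eq (hcont.locallyIntegrable.locallyIntegrableOn _)
    (by positivity) (by positivity) hL Real.tendsto_exp_neg_atTop_nhds_zero hint]
  simp

lemma exp_neg_one_le_exp_neg_iff {u : ℝ} : Real.exp (-u) ∈ Ici (Real.exp (-1)) ↔ u ≤ 1 := by
  simp

/-- The test function whose integral against the Frullani density is Euler's constant. -/
lemma integral_cutoff_mul_frullaniDensity :
    (∫ u in Ioi (0 : ℝ), (Ici (Real.exp (-1))).indicator
        (fun y => 1 / max y (Real.exp (-1)) + 1 / (1 - min y (Real.exp (-1)))) (Real.exp (-u)) *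
          frullaniDensity u) -
      (∫ u in Ioi (0 : ℝ), 1 / (1 - min (Real.exp (-u)) (Real.exp (-1))) * frullaniDensity u) =
      Real.eulerMascheroniConstant := by
  have he : Real.exp (-1) < 1 := by simp
  have hpos (y : ℝ) : 0 < max y (Real.exp (-1)) := (Real.exp_pos _).trans_le (le_max_right _ _)
  have hpos' (y : ℝ) : 0 < 1 - min y (Real.exp (-1)) := by
    linarith [min_le_right y (Real.exp (-1))]
  have hc1 : Continuous fun y => 1 / max y (Real.exp (-1)) + 1 / (1 - min y (Real.exp (-1))) :=
    (continuous_const.div (by fun_prop) fun y => (hpos y).ne').add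
      (continuous_const.div (by fun_prop) fun y => (hpos' y).ne')
  have hc2 : Continuous fun y => 1 / (1 - min y (Real.exp (-1))) :=
    continuous_const.div (by fun_prop) fun y => (hpos' y).ne'
  obtain ⟨C, hC⟩ := exists_bound_of_continuous hc1
  obtain ⟨D, hD⟩ := exists_bound_of_continuous hc2
  have hi1 := integrableOn_bounded_mul integrableOn_frullaniDensity
    (hc1.measurable.indicator (measurableSet_Ici (a := Real.exp (-1)))) (C := C) fun y hy => by
      refine le_trans ?_ (hC y hy)
      rw [← Real.norm_eq_abs, ← Real.norm_eq_abs]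
      exact norm_indicator_le_norm_self _ _
  have hi2 := integrableOn_bounded_mul integrableOn_frullaniDensity hc2.measurable hD
  rw [← integral_sub hi1 hi2]
  have hint := hi1.sub hi2
  simp only [Pi.sub_def] at hint
  rw [← Ioc_union_Ioi_eq_Ioi (zero_le_one (α := ℝ)), setIntegral_union
    (Ioc_disjoint_Ioi le_rfl) measurableSet_Ioi (hint.mono_set Ioc_subset_Ioi_self)
    (hint.mono_set (Ioi_subset_Ioi zero_le_one)),
    ← integral_one_sub_exp_neg_div_sub_integral_exp_neg_div, sub_eq_add_neg, ← integral_neg]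
  congr 1
  · refine setIntegral_congr_fun measurableSet_Ioc fun u hu => ?_
    have hmem : Real.exp (-u) ∈ Ici (Real.exp (-1)) := exp_neg_one_le_exp_neg_iff.2 hu.2
    simp only [indicator_of_mem hmem]
    rw [max_eq_left (mem_Ici.1 hmem), ← sub_mul, add_sub_cancel_right, frullaniDensity]
    field_simp
  · refine setIntegral_congr_fun measurableSet_Ioi fun u hu => ?_
    have hu' : (1 : ℝ) < u := hu
    have hmem : Real.exp (-u) ∉ Ici (Real.exp (-1)) := by
      rw [exp_neg_one_le_exp_neg_iff]; exact not_le.2 hu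
    have hlt : Real.exp (-u) < Real.exp (-1) := by simpa using hmem
    have h1 : 1 - Real.exp (-u) ≠ 0 := by linarith
    simp only [indicator_of_notMem hmem]
    rw [min_eq_left hlt.le, frullaniDensity]
    field_simp
    ring

/-- The density of the Gamma distribution with shape `θ` and rate `1`. -/
noncomputable def gammaDensity (θ u : ℝ) : ℝ := u ^ (θ - 1) * Real.exp (-u) / Real.Gamma θ

lemma gammaDensity_nonneg {θ u : ℝ} (hθ : 0 < θ) (hu : u ∈ Ioi (0 : ℝ)) : 0 ≤ gammaDensity θ u :=
  div_nonneg (mul_nonneg (Real.rpow_nonneg (mem_Ioi.1 hu).le _) (Real.exp_pos _).le)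
    (Real.Gamma_pos_of_pos hθ).le

lemma integrableOn_gammaDensity {θ : ℝ} (hθ : 0 < θ) : IntegrableOn (gammaDensity θ) (Ioi 0) := by
  refine Integrable.div_const ?_ _
  exact (Real.GammaIntegral_convergent hθ).congr_fun (fun u _ => mul_comm _ _) measurableSet_Ioi

lemma integral_exp_neg_pow_mul_gammaDensity {θ : ℝ} (hθ : 0 < θ) (j : ℕ) :
    ∫ u in Ioi (0 : ℝ), Real.exp (-u) ^ j * gammaDensity θ u = (j + 1 : ℝ) ^ (-θ) := by
  have hfun (u : ℝ) : Real.exp (-u) ^ j * gammaDensity θ u =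
      u ^ (θ - 1) * Real.exp (-((j + 1 : ℝ) * u)) / Real.Gamma θ := by
    have h1 : Real.exp (-((j + 1 : ℝ) * u)) = Real.exp (-u) ^ j * Real.exp (-u) := by
      rw [← Real.exp_nat_mul, ← Real.exp_add]; ring_nf
    rw [h1, gammaDensity]
    ring
  simp_rw [hfun]
  rw [integral_div, Real.integral_rpow_mul_exp_neg_mul_Ioi hθ (by positivity),
    mul_div_cancel_right₀ _ (Real.Gamma_pos_of_pos hθ).ne', one_div,
    Real.inv_rpow (by positivity), Real.rpow_neg (by positivity)]

lemma integral_cutoff_mul_gammaDensity {θ : ℝ} (hθ : 0 < θ) :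
    ∫ u in Ioi (0 : ℝ), (Ici (Real.exp (-1))).indicator (fun y => 1 / max y (Real.exp (-1)))
      (Real.exp (-u)) * gammaDensity θ u = 1 / Real.Gamma (θ + 1) := by
  have hfun (u : ℝ) : (Ici (Real.exp (-1))).indicator (fun y => 1 / max y (Real.exp (-1)))
      (Real.exp (-u)) * gammaDensity θ u =
      (Iic 1).indicator (fun u => u ^ (θ - 1) / Real.Gamma θ) u := by
    by_cases hu : u ≤ 1
    · have hmem : Real.exp (-u) ∈ Ici (Real.exp (-1)) := exp_neg_one_le_exp_neg_iff.2 hu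
      rw [indicator_of_mem hmem, indicator_of_mem (by exact hu), max_eq_left (mem_Ici.1 hmem),
        gammaDensity]
      field_simp
    · have hmem : Real.exp (-u) ∉ Ici (Real.exp (-1)) := by rwa [exp_neg_one_le_exp_neg_iff]
      rw [indicator_of_notMem hmem, indicator_of_notMem (by exact hu), zero_mul]
  simp_rw [hfun]
  rw [setIntegral_indicator measurableSet_Iic, Ioi_inter_Iic,
    ← intervalIntegral.integral_of_le zero_le_one, intervalIntegral.integral_div,
    integral_rpow (Or.inl (by linarith)), Real.Gamma_add_one hθ.ne']
  have := (Real.Gamma_pos_of_pos hθ).ne'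
  simp [hθ.ne']
  field_simp

/-- The set of primes. -/
def primeSet : Set ℕ := {p | p.Prime}

/-- The sum of `p ^ (-s)` over `p ∈ T`. -/
noncomputable def primeSum (T : Set ℕ) (s : ℝ) : ℝ :=
  ∑' n, T.indicator (fun n : ℕ => (n : ℝ) ^ (-s)) n

/-- Bounds shared by the local Euler factors of the zeta function and of its `k`-free variants. -/
structure IsLocalFactor (G : ℝ → ℝ) : Prop where
  continuousOn : ContinuousOn G (Icc 0 (1 / 2))
  lower : ∀ y ∈ Icc (0 : ℝ) (1 / 2), 1 + y ≤ G y
  upper : ∀ y ∈ Icc (0 : ℝ) (1 / 2), G y ≤ (1 - y)⁻¹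

/-- The sum over `p ∈ T` of the error in `log (G y) ≈ y` at `y = p ^ (-s)`. -/
noncomputable def remainderSum (G : ℝ → ℝ) (T : Set ℕ) (s : ℝ) : ℝ :=
  ∑' n, T.indicator (fun n : ℕ => Real.log (G ((n : ℝ) ^ (-s))) - (n : ℝ) ^ (-s)) n

lemma natCast_pow_rpow (n e : ℕ) (t : ℝ) : ((n ^ e : ℕ) : ℝ) ^ t = ((n : ℝ) ^ t) ^ e := by
  push_cast
  rw [← Real.rpow_natCast, ← Real.rpow_mul (Nat.cast_nonneg _), mul_comm,
    Real.rpow_mul (Nat.cast_nonneg _), Real.rpow_natCast]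

lemma prime_rpow_neg_mem {p : ℕ} (hp : p.Prime) {s : ℝ} (hs : 1 ≤ s) :
    (p : ℝ) ^ (-s) ∈ Icc (0 : ℝ) (1 / 2) := by
  have h2 : (2 : ℝ) ≤ p := by exact_mod_cast hp.two_le
  refine ⟨by positivity, ?_⟩
  calc (p : ℝ) ^ (-s) ≤ (p : ℝ) ^ (-1 : ℝ) :=
        Real.rpow_le_rpow_of_exponent_le (by linarith) (by linarith)
    _ ≤ 1 / 2 := by rw [Real.rpow_neg_one, ← one_div]; gcongr

namespace IsLocalFactor

variable {G : ℝ → ℝ}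

lemma pos (hG : IsLocalFactor G) {y : ℝ} (hy : y ∈ Icc (0 : ℝ) (1 / 2)) : 0 < G y := by
  linarith [hG.lower y hy, hy.1]

lemma abs_log_sub_le (hG : IsLocalFactor G) {y : ℝ} (hy : y ∈ Icc (0 : ℝ) (1 / 2)) :
    |Real.log (G y) - y| ≤ 2 * y ^ 2 := by
  have hl := hG.lower y hy
  have hu := hG.upper y hy
  obtain ⟨hy0, hy1⟩ := hy
  have h1 : 0 < 1 - y := by linarith
  rw [abs_le]
  constructor
  · have h2 := (Real.one_sub_inv_le_log_of_pos (show 0 < 1 + y by linarith)).trans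
      (Real.log_le_log (by linarith) hl)
    have h3 : y - y ^ 2 ≤ 1 - (1 + y)⁻¹ := by
      rw [← sub_nonneg]
      have : 1 - (1 + y)⁻¹ - (y - y ^ 2) = y ^ 3 / (1 + y) := by field_simp; ring
      rw [this]
      positivity
    nlinarith [sq_nonneg y]
  · have h2 := (Real.log_le_log (by linarith) hu).trans
      (Real.log_le_sub_one_of_pos (inv_pos.2 h1))
    have h3 : (1 - y)⁻¹ - 1 ≤ y + 2 * y ^ 2 := by
      rw [← sub_nonneg]
      have : y + 2 * y ^ 2 - ((1 - y)⁻¹ - 1) = y ^ 2 * (1 - 2 * y) / (1 - y) := by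
        field_simp; ring
      rw [this]
      have : 0 ≤ 1 - 2 * y := by linarith
      positivity
    linarith

lemma abs_indicator_le (hG : IsLocalFactor G) {T : Set ℕ} (hT : T ⊆ primeSet) {s : ℝ}
    (hs : 1 ≤ s) (n : ℕ) :
    ‖T.indicator (fun n : ℕ => Real.log (G ((n : ℝ) ^ (-s))) - (n : ℝ) ^ (-s)) n‖ ≤
      2 * (n : ℝ) ^ (-2 : ℝ) := by
  by_cases hn : n ∈ T
  · rw [indicator_of_mem hn, Real.norm_eq_abs]
    refine (hG.abs_log_sub_le (prime_rpow_neg_mem (hT hn) hs)).trans ?_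
    have h1 : (1 : ℝ) ≤ n := by exact_mod_cast (show n.Prime from hT hn).one_le
    rw [← Real.rpow_natCast, ← Real.rpow_mul (by positivity)]
    gcongr 2 * ?_
    exact Real.rpow_le_rpow_of_exponent_le h1 (by push_cast; linarith)
  · rw [indicator_of_notMem hn, norm_zero]
    positivity

lemma summable_remainder (hG : IsLocalFactor G) {T : Set ℕ} (hT : T ⊆ primeSet) {s : ℝ}
    (hs : 1 ≤ s) : Summable (T.indicator
      (fun n : ℕ => Real.log (G ((n : ℝ) ^ (-s))) - (n : ℝ) ^ (-s))) :=
  Summable.of_norm_bounded ((Real.summable_nat_rpow.2 (by norm_num)).mul_left 2)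
    (hG.abs_indicator_le hT hs)

lemma tendsto_remainderSum (hG : IsLocalFactor G) {ι : Type*} {l : Filter ι} {T : ι → Set ℕ}
    {A : Set ℕ} {s : ι → ℝ} (hT : ∀ i, T i ⊆ primeSet) (hA : A ⊆ primeSet)
    (hTA : ∀ n, ∀ᶠ i in l, (n ∈ T i ↔ n ∈ A)) (hs : Tendsto s l (𝓝 1))
    (hs1 : ∀ᶠ i in l, 1 ≤ s i) :
    Tendsto (fun i => remainderSum G (T i) (s i)) l (𝓝 (remainderSum G A 1)) := by
  refine tendsto_tsum_of_dominated_convergence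
    ((Real.summable_nat_rpow.2 (by norm_num : (-2 : ℝ) < -1)).mul_left 2) (fun n => ?_) ?_
  · by_cases hn : n ∈ A
    · have hp : n.Prime := hA hn
      have h1 : Tendsto (fun i => (n : ℝ) ^ (-s i)) l (𝓝 ((n : ℝ) ^ (-1 : ℝ))) :=
        tendsto_const_nhds.rpow hs.neg (Or.inl (by exact_mod_cast hp.ne_zero))
      have h2 : Tendsto (fun i => G ((n : ℝ) ^ (-s i))) l (𝓝 (G ((n : ℝ) ^ (-1 : ℝ)))) := by
        refine (hG.continuousOn _ (prime_rpow_neg_mem hp le_rfl)).tendsto.comp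
          (tendsto_nhdsWithin_iff.2 ⟨h1, ?_⟩)
        filter_upwards [hs1] with i hi using prime_rpow_neg_mem hp hi
      rw [indicator_of_mem hn]
      refine ((h2.log (hG.pos (prime_rpow_neg_mem hp le_rfl)).ne').sub h1).congr' ?_
      filter_upwards [hTA n] with i hi
      rw [indicator_of_mem (hi.2 hn)]
    · rw [indicator_of_notMem hn]
      refine tendsto_const_nhds.congr' ?_
      filter_upwards [hTA n] with i hi
      rw [indicator_of_notMem (mt hi.1 hn)]
  · filter_upwards [hs1] with i hi n using hG.abs_indicator_le (hT i) hi n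

/-- An Euler product as an exponential. -/
lemma eq_exp_of_hasProd (hG : IsLocalFactor G) {T : Set ℕ} (hT : T ⊆ primeSet) {s : ℝ}
    (hs : 1 ≤ s) (hsum : Summable (T.indicator (fun n : ℕ => (n : ℝ) ^ (-s)))) {F : ℝ}
    (hF : HasProd (T.mulIndicator fun n : ℕ => G ((n : ℝ) ^ (-s))) F) :
    F = Real.exp (primeSum T s + remainderSum G T s) := by
  refine hF.unique ?_
  convert! (hsum.hasSum.add (hG.summable_remainder hT hs).hasSum).rexp using 1
  ext n
  by_cases hn : n ∈ T
  · simp [hn, Real.exp_log (hG.pos (prime_rpow_neg_mem (hT hn) hs))]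
  · simp [hn]

end IsLocalFactor

lemma summable_indicator_rpow_neg (T : Set ℕ) {s : ℝ} (hs : 1 < s) :
    Summable (T.indicator (fun n : ℕ => (n : ℝ) ^ (-s))) :=
  (Real.summable_nat_rpow.2 (by linarith)).indicator T

lemma isLocalFactor_geometric : IsLocalFactor fun y => (1 - y)⁻¹ where
  continuousOn := by
    refine ContinuousOn.inv₀ (by fun_prop) fun y hy => ?_
    have := hy.2
    linarith
  lower y hy := by
    have h1 : 0 < 1 - y := by linarith [hy.2]
    rw [← one_div, le_div_iff₀ h1]
    nlinarith [sq_nonneg y]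
  upper y hy := le_rfl

lemma isLocalFactor_geom_sum {k : ℕ} (hk : 2 ≤ k) :
    IsLocalFactor fun y => ∑ e ∈ Finset.range k, y ^ e where
  continuousOn := by fun_prop
  lower y hy := by
    have h := Finset.sum_le_sum_of_subset_of_nonneg (Finset.range_mono hk)
      (f := fun e => y ^ e) fun e _ _ => pow_nonneg hy.1 e
    simpa [Finset.sum_range_succ] using h
  upper y hy := by
    have h1 : 0 < 1 - y := by linarith [hy.2]
    rw [← one_div, le_div_iff₀ h1, geom_sum_mul_neg]
    linarith [pow_nonneg hy.1 k]

lemma tsum_rpow_neg_eq_exp {s : ℝ} (hs : 1 < s) :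
    ∑' n : ℕ, (n : ℝ) ^ (-s) =
      Real.exp (primeSum primeSet s + remainderSum (fun y => (1 - y)⁻¹) primeSet s) := by
  refine isLocalFactor_geometric.eq_exp_of_hasProd Subset.rfl hs.le
    (summable_indicator_rpow_neg _ hs) ?_
  have hs0 : -s ≠ 0 := by linarith
  have hsum : Summable fun n : ℕ => ‖(n : ℝ) ^ (-s)‖ :=
    (Real.summable_nat_rpow.2 (by linarith)).norm
  have h := EulerProduct.eulerProduct_hasProd_mulIndicator (f := fun n : ℕ => (n : ℝ) ^ (-s))
    (by simp) (fun {m n} _ => by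
      push_cast
      exact Real.mul_rpow (Nat.cast_nonneg _) (Nat.cast_nonneg _)) hsum
    (by simp [Real.zero_rpow hs0])
  convert! h using 1
  funext n
  by_cases hn : n.Prime
  · have hy := prime_rpow_neg_mem hn hs.le
    rw [mulIndicator_of_mem (show n ∈ primeSet from hn), mulIndicator_of_mem (by exact hn)]
    simp_rw [natCast_pow_rpow]
    rw [tsum_geometric_of_lt_one hy.1 (by linarith [hy.2])]
  · rw [mulIndicator_of_notMem (show n ∉ primeSet from hn), mulIndicator_of_notMem (by exact hn)]

/-- Positive `k`-free integers whose prime factors lie in `T`. -/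
def kfreeSet (k : ℕ) (T : Set ℕ) : Set ℕ :=
  {n | 0 < n ∧ (∀ p : ℕ, p.Prime → p ∣ n → p ∈ T) ∧ KFree k n}

/-- The Dirichlet series of the `k`-free integers with prime factors in `T`. -/
noncomputable def kfreeSeries (k : ℕ) (T : Set ℕ) (s : ℝ) : ℝ :=
  ∑' n, (kfreeSet k T).indicator (fun n : ℕ => (n : ℝ) ^ (-s)) n

lemma kfree_mul_iff {k m n : ℕ} (hmn : m.Coprime n) : KFree k (m * n) ↔ KFree k m ∧ KFree k n := by
  refine ⟨fun h => ⟨fun p hp hd => h p hp (hd.mul_right _), fun p hp hd => h p hp (hd.mul_left _)⟩,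
    fun h p hp hd => ?_⟩
  have hk : k ≠ 0 := by
    rintro rfl
    exact h.1 p hp (by simp)
  rcases (Nat.Coprime.isPrimePow_dvd_mul hmn (hp.prime.isPrimePow.pow hk)).1 hd with hd | hd
  · exact h.1 p hp hd
  · exact h.2 p hp hd

lemma mul_mem_kfreeSet_iff {k : ℕ} {T : Set ℕ} {m n : ℕ} (hmn : m.Coprime n) :
    m * n ∈ kfreeSet k T ↔ m ∈ kfreeSet k T ∧ n ∈ kfreeSet k T := by
  have h : (∀ p : ℕ, p.Prime → p ∣ m * n → p ∈ T) ↔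
      (∀ p : ℕ, p.Prime → p ∣ m → p ∈ T) ∧ (∀ p : ℕ, p.Prime → p ∣ n → p ∈ T) := by
    refine ⟨fun h => ⟨fun p hp hd => h p hp (hd.mul_right _),
      fun p hp hd => h p hp (hd.mul_left _)⟩, fun h p hp hd => ?_⟩
    exact (hp.dvd_mul.1 hd).elim (h.1 p hp) (h.2 p hp)
  simp only [kfreeSet, mem_ofPred_eq, kfree_mul_iff hmn, h,
    CanonicallyOrderedAdd.mul_pos]
  tauto

lemma prime_pow_mem_kfreeSet_iff {k : ℕ} (hk : k ≠ 0) {T : Set ℕ} {p : ℕ} (hp : p.Prime)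
    (e : ℕ) : p ^ e ∈ kfreeSet k T ↔ e < k ∧ (e ≠ 0 → p ∈ T) := by
  constructor
  · rintro ⟨_, h1, h2⟩
    refine ⟨?_, fun he => h1 p hp (dvd_pow_self p he)⟩
    by_contra! hle
    exact h2 p hp (pow_dvd_pow p hle)
  · rintro ⟨h1, h2⟩
    refine ⟨pow_pos hp.pos e, fun q hq hd => ?_, fun q hq hd => ?_⟩
    · have hqp := (Nat.prime_dvd_prime_iff_eq hq hp).1 (hq.dvd_of_dvd_pow hd)
      subst hqp
      refine h2 ?_
      rintro rfl
      exact hq.one_lt.ne' (Nat.dvd_one.1 (by simpa using hd))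
    · have hqp := (Nat.prime_dvd_prime_iff_eq hq hp).1
        (hq.dvd_of_dvd_pow ((dvd_pow_self q hk).trans hd))
      subst hqp
      exact absurd ((Nat.pow_dvd_pow_iff_le_right hq.one_lt).1 hd) (not_le.2 h1)

lemma kfreeSeries_eq_exp {k : ℕ} (hk : 2 ≤ k) {T : Set ℕ} (hT : T ⊆ primeSet) {s : ℝ}
    (hs : 1 ≤ s) (hsumT : Summable (T.indicator (fun n : ℕ => (n : ℝ) ^ (-s))))
    (hsum : Summable ((kfreeSet k T).indicator (fun n : ℕ => (n : ℝ) ^ (-s)))) :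
    kfreeSeries k T s = Real.exp (primeSum T s +
      remainderSum (fun y => ∑ e ∈ Finset.range k, y ^ e) T s) := by
  refine (isLocalFactor_geom_sum hk).eq_exp_of_hasProd hT hs hsumT ?_
  have hk0 : k ≠ 0 := by omega
  have h1 : (1 : ℕ) ∈ kfreeSet k T := by
    simpa using (prime_pow_mem_kfreeSet_iff hk0 (T := T) Nat.prime_two 0).2 ⟨by omega, by simp⟩
  have h := EulerProduct.eulerProduct_hasProd_mulIndicator
    (f := (kfreeSet k T).indicator (fun n : ℕ => (n : ℝ) ^ (-s))) (by simp [h1]) (fun {m n} hmn => ?_)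
    hsum.norm (indicator_of_notMem (fun h => lt_irrefl _ h.1) _)
  · convert! h using 1
    funext p
    by_cases hp : p.Prime
    · rw [mulIndicator_of_mem (show p ∈ {p | p.Prime} from hp)]
      have hterm (e : ℕ) : (kfreeSet k T).indicator (fun n : ℕ => (n : ℝ) ^ (-s)) (p ^ e) =
          if e < k ∧ (e ≠ 0 → p ∈ T) then ((p : ℝ) ^ (-s)) ^ e else 0 := by
        rw [indicator_apply, prime_pow_mem_kfreeSet_iff hk0 hp, natCast_pow_rpow]
        split_ifs <;> rfl
      simp_rw [hterm]
      by_cases hpT : p ∈ T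
      · rw [mulIndicator_of_mem hpT, tsum_eq_sum (s := Finset.range k)]
        · refine Finset.sum_congr rfl fun e he => ?_
          rw [if_pos ⟨Finset.mem_range.1 he, fun _ => hpT⟩]
        · intro e he
          rw [if_neg fun h => he (Finset.mem_range.2 h.1)]
      · rw [mulIndicator_of_notMem hpT, tsum_eq_single 0]
        · simp; omega
        · intro e he
          rw [if_neg fun h => hpT (h.2 he)]
    · rw [mulIndicator_of_notMem (show p ∉ {p | p.Prime} from hp),
        mulIndicator_of_notMem fun h => hp (hT h)]
  · by_cases h : m ∈ kfreeSet k T ∧ n ∈ kfreeSet k T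
    · rw [indicator_of_mem ((mul_mem_kfreeSet_iff hmn).2 h), indicator_of_mem h.1,
        indicator_of_mem h.2]
      push_cast
      exact Real.mul_rpow (Nat.cast_nonneg _) (Nat.cast_nonneg _)
    · rw [indicator_of_notMem (mt (mul_mem_kfreeSet_iff hmn).1 h)]
      rcases not_and_or.1 h with h | h <;> simp [h]

lemma finite_kfreeSet {k N : ℕ} {T : Set ℕ} (hT : T ⊆ Iic N) :
    (kfreeSet k T).Finite := by
  refine (finite_Iic ((N.factorial) ^ k)).subset ?_
  rintro n ⟨hn, h1, h2⟩
  refine Nat.le_of_dvd (pow_pos N.factorial_pos k) ?_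
  rw [← Nat.factorization_prime_le_iff_dvd hn.ne' (pow_pos N.factorial_pos k).ne']
  intro p hp
  by_cases hd : p ∣ n
  · have hle : n.factorization p ≤ k := by
      by_contra! hlt
      exact h2 p hp ((hp.pow_dvd_iff_le_factorization hn.ne').2 hlt.le)
    have hpN : p ∣ N.factorial := (hp.dvd_factorial).2 (hT (h1 p hp hd))
    refine hle.trans ((hp.pow_dvd_iff_le_factorization (pow_pos N.factorial_pos k).ne').1 ?_)
    exact pow_dvd_pow_of_dvd hpN k
  · simp [Nat.factorization_eq_zero_of_not_dvd hd]

lemma kfreeHarmSum_eq_exp {k : ℕ} (hk : 2 ≤ k) {A : Set ℕ} (hA : A ⊆ primeSet) (N : ℕ) :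
    kfreeHarmSum k (fun p => p ≤ N ∧ p ∈ A) = Real.exp (primeSum (A ∩ Iic N) 1 +
      remainderSum (fun y => ∑ e ∈ Finset.range k, y ^ e) (A ∩ Iic N) 1) := by
  rw [← kfreeSeries_eq_exp hk (inter_subset_left.trans hA) le_rfl]
  · have : kfreeSet k (A ∩ Iic N) = {n | 0 < n ∧
        (∀ p : ℕ, p.Prime → p ∣ n → p ≤ N ∧ p ∈ A) ∧ KFree k n} := by
      simp only [kfreeSet, mem_inter_iff, mem_Iic, and_comm]
    rw [kfreeSeries, ← tsum_subtype, this, kfreeHarmSum]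
    refine tsum_congr fun n => ?_
    rw [Real.rpow_neg_one, one_div]
  · exact summable_of_hasFiniteSupport
      (((finite_Iic N).inter_of_right A).subset support_indicator_subset)
  · exact summable_of_hasFiniteSupport
      ((finite_kfreeSet inter_subset_right).subset support_indicator_subset)

/-- Partial summation: if the partial sums of `b` from `N₀` on are nonnegative and `f` decreases
to the right of `N₀`, then the tail of `∑ b n * f n` is controlled from below. -/
lemma abel_le_tsum {b f : ℕ → ℝ} {N₀ : ℕ} (hb : ∀ N ≥ N₀, 0 ≤ ∑ i ∈ Finset.range N, b i)
    (hf0 : ∀ n ≥ N₀, 0 ≤ f n) (hf : ∀ n ≥ N₀, f (n + 1) ≤ f n)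
    (hs : Summable fun n => b n * f n) :
    ∑ i ∈ Finset.range N₀, b i * f i - (∑ i ∈ Finset.range N₀, b i) * f N₀ ≤
      ∑' n, b n * f n := by
  have key (M : ℕ) (hM : N₀ ≤ M) :
      ∑ i ∈ Finset.range N₀, b i * f i - (∑ i ∈ Finset.range N₀, b i) * f N₀ +
        (∑ i ∈ Finset.range M, b i) * f M ≤ ∑ i ∈ Finset.range M, b i * f i := by
    induction M, hM using Nat.le_induction with
    | base => simp
    | succ M hM ih =>
      have h := mul_le_mul_of_nonneg_left (hf M hM) (hb (M + 1) (by omega))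
      rw [Finset.sum_range_succ] at h ⊢
      rw [Finset.sum_range_succ]
      linarith
  refine ge_of_tendsto hs.hasSum.tendsto_sum_nat ?_
  filter_upwards [eventually_ge_atTop N₀] with M hM
  linarith [key M hM, mul_nonneg (hb M hM) (hf0 M hM)]

lemma rpow_neg_sub_rpow_neg_anti {x y α β : ℝ} (hx : Real.exp 1 ≤ x) (hxy : x ≤ y) (hα : 1 ≤ α)
    (hαβ : α ≤ β) : y ^ (-α) - y ^ (-β) ≤ x ^ (-α) - x ^ (-β) := by
  have hx0 : 0 < x := (Real.exp_pos 1).trans_le hx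
  have hy0 : 0 < y := hx0.trans_le hxy
  have hu : 1 ≤ Real.log x := (Real.le_log_iff_exp_le hx0).2 hx
  have huv : Real.log x ≤ Real.log y := Real.log_le_log hx0 hxy
  rw [Real.rpow_def_of_pos hx0, Real.rpow_def_of_pos hx0, Real.rpow_def_of_pos hy0,
    Real.rpow_def_of_pos hy0]
  set u := Real.log x
  set v := Real.log y
  have hu0 : 0 < u := by linarith
  have hsplit (t : ℝ) : Real.exp (t * -α) - Real.exp (t * -β) =
      Real.exp (t * -α) * (1 - Real.exp (-((β - α) * t))) := by
    rw [mul_sub, mul_one, ← Real.exp_add]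
    ring_nf
  rw [hsplit, hsplit]
  have hX : Real.exp (-((β - α) * u)) ≤ 1 :=
    Real.exp_le_one_iff.2 (by nlinarith [mul_nonneg (sub_nonneg.2 hαβ) hu0.le])
  have hbern := one_add_mul_self_le_rpow_one_add
    (s := Real.exp (-((β - α) * u)) - 1) (p := v / u)
    (by linarith [Real.exp_pos (-((β - α) * u))]) ((one_le_div hu0).2 huv)
  rw [add_sub_cancel, ← Real.exp_mul] at hbern
  have he : -((β - α) * u) * (v / u) = -((β - α) * v) := by field_simp
  rw [he] at hbern
  have hvu : v / u ≤ Real.exp (v - u) := by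
    have h1 : v / u ≤ v - u + 1 := by
      rw [div_le_iff₀ hu0]
      nlinarith
    exact h1.trans (Real.add_one_le_exp _)
  have hexp : Real.exp (v * -α) * Real.exp (v - u) ≤ Real.exp (u * -α) := by
    rw [← Real.exp_add, Real.exp_le_exp]
    nlinarith
  calc Real.exp (v * -α) * (1 - Real.exp (-((β - α) * v)))
      ≤ Real.exp (v * -α) * (Real.exp (v - u) * (1 - Real.exp (-((β - α) * u)))) := by
        gcongr
        have := mul_le_mul_of_nonneg_right hvu (sub_nonneg.2 hX)
        linarith
    _ ≤ Real.exp (u * -α) * (1 - Real.exp (-((β - α) * u))) := by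
        rw [← mul_assoc]
        exact mul_le_mul_of_nonneg_right hexp (sub_nonneg.2 hX)

lemma tendsto_one_add_mul (a : ℝ) : Tendsto (fun σ : ℝ => 1 + a * σ) (𝓝[>] 0) (𝓝 1) := by
  have : Tendsto (fun σ : ℝ => 1 + a * σ) (𝓝 0) (𝓝 (1 + a * 0)) :=
    (Continuous.tendsto (by fun_prop) 0)
  simpa using this.mono_left nhdsWithin_le_nhds

lemma eventually_one_lt_one_add_mul {a : ℝ} (ha : 0 < a) :
    ∀ᶠ σ : ℝ in 𝓝[>] 0, 1 < 1 + a * σ := by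
  filter_upwards [self_mem_nhdsWithin] with σ hσ
  linarith [mul_pos ha (mem_Ioi.1 hσ)]

lemma tendsto_remainderSum_one_add_mul {G : ℝ → ℝ} (hG : IsLocalFactor G) {T : Set ℕ}
    (hT : T ⊆ primeSet) {a : ℝ} (ha : 0 < a) :
    Tendsto (fun σ => remainderSum G T (1 + a * σ)) (𝓝[>] 0) (𝓝 (remainderSum G T 1)) :=
  hG.tendsto_remainderSum (fun _ => hT) hT (fun _ => .of_forall fun _ => Iff.rfl)
    (tendsto_one_add_mul a) ((eventually_one_lt_one_add_mul ha).mono fun _ h => h.le)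

lemma tendsto_log_mul_exp_primeSum {a : ℝ} (ha : 0 < a) :
    Tendsto (fun σ => Real.log σ + primeSum primeSet (1 + a * σ)) (𝓝[>] 0)
      (𝓝 (-Real.log a - remainderSum (fun y => (1 - y)⁻¹) primeSet 1)) := by
  have hlim : Tendsto (fun σ : ℝ => 1 + a * σ) (𝓝[>] 0) (𝓝[>] 1) :=
    tendsto_nhdsWithin_iff.2 ⟨tendsto_one_add_mul a, eventually_one_lt_one_add_mul ha⟩
  have h1 := (tendsto_sub_mul_tsum_nat_rpow.comp hlim).log one_ne_zero
  have h2 := ((h1.sub_const (Real.log a)).sub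
    (tendsto_remainderSum_one_add_mul isLocalFactor_geometric Subset.rfl ha))
  rw [Real.log_one, zero_sub] at h2
  refine h2.congr' ?_
  filter_upwards [self_mem_nhdsWithin, eventually_one_lt_one_add_mul ha] with σ hσ hs
  have hσ0 : σ ≠ 0 := (mem_Ioi.1 hσ).ne'
  have h3 := tsum_rpow_neg_eq_exp hs
  simp only [Function.comp_apply, one_div, ← Real.rpow_neg (Nat.cast_nonneg _), h3]
  rw [add_sub_cancel_left, Real.log_mul (mul_ne_zero ha.ne' hσ0) (Real.exp_ne_zero _),
    Real.log_exp, Real.log_mul ha.ne' hσ0]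
  ring

lemma tendsto_primeSum_primeSet_sub {a b : ℝ} (ha : 0 < a) (hb : 0 < b) :
    Tendsto (fun σ => primeSum primeSet (1 + a * σ) - primeSum primeSet (1 + b * σ)) (𝓝[>] 0)
      (𝓝 (Real.log (b / a))) := by
  rw [Real.log_div hb.ne' ha.ne']
  convert! (tendsto_log_mul_exp_primeSum ha).sub (tendsto_log_mul_exp_primeSum hb) using 2 <;> ring

/-- A bounded sequence with eventually nonnegative partial sums gives asymptotically nonnegative
differences of Dirichlet series near `1`. -/
lemma eventually_lt_tsum_mul_rpow_sub {b : ℕ → ℝ} {K : ℝ} (hK : ∀ n, |b n| ≤ K)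
    (hb : ∀ᶠ N in atTop, 0 ≤ ∑ i ∈ Finset.range N, b i) {α β : ℝ} (hα : 0 < α) (hαβ : α < β)
    {c : ℝ} (hc : c < 0) :
    ∀ᶠ σ : ℝ in 𝓝[>] 0,
      c < ∑' n : ℕ, b n * ((n : ℝ) ^ (-(1 + α * σ)) - (n : ℝ) ^ (-(1 + β * σ))) := by
  obtain ⟨N₁, hN₁⟩ := eventually_atTop.1 hb
  set N₀ := max N₁ 3
  have hpt (n : ℕ) : Tendsto (fun σ : ℝ => (n : ℝ) ^ (-(1 + α * σ)) - (n : ℝ) ^ (-(1 + β * σ)))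
      (𝓝[>] 0) (𝓝 0) := by
    rcases eq_or_ne n 0 with rfl | hn
    · refine tendsto_const_nhds.congr' ?_
      filter_upwards [eventually_one_lt_one_add_mul hα,
        eventually_one_lt_one_add_mul (hα.trans hαβ)] with σ h1 h2
      rw [Nat.cast_zero, Real.zero_rpow (by linarith), Real.zero_rpow (by linarith), sub_zero]
    · have hn' : (n : ℝ) ≠ 0 := by exact_mod_cast hn
      have h (a : ℝ) : Tendsto (fun σ : ℝ => (n : ℝ) ^ (-(1 + a * σ))) (𝓝[>] 0)
          (𝓝 ((n : ℝ) ^ (-1 : ℝ))) :=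
        tendsto_const_nhds.rpow (tendsto_one_add_mul a).neg (Or.inl hn')
      simpa using (h α).sub (h β)
  have hC := (tendsto_finsetSum (Finset.range N₀) fun i _ => (hpt i).const_mul (b i)).sub
    ((hpt N₀).const_mul (∑ i ∈ Finset.range N₀, b i))
  simp only [mul_zero, Finset.sum_const_zero, sub_zero] at hC
  filter_upwards [hC.eventually_const_lt hc, self_mem_nhdsWithin,
    eventually_one_lt_one_add_mul hα, eventually_one_lt_one_add_mul (hα.trans hαβ)]
    with σ h1 hσ h2 h3
  have hle : 1 + α * σ ≤ 1 + β * σ := by nlinarith [mem_Ioi.1 hσ]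
  have hge (n : ℕ) (hn : N₀ ≤ n) : (3 : ℝ) ≤ n := by exact_mod_cast (le_max_right _ _).trans hn
  refine h1.trans_le (abel_le_tsum (fun N hN => hN₁ N ((le_max_left _ _).trans hN))
    (fun n hn => ?_) (fun n hn => ?_) ?_)
  · exact sub_nonneg.2 (Real.rpow_le_rpow_of_exponent_le (by linarith [hge n hn]) (by linarith))
  · exact rpow_neg_sub_rpow_neg_anti (by linarith [hge n hn, Real.exp_one_lt_d9])
      (by push_cast; linarith) h2.le hle
  · have hf := ((Real.summable_nat_rpow.2 (by linarith : -(1 + α * σ) < -1)).sub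
      (Real.summable_nat_rpow.2 (by linarith : -(1 + β * σ) < -1))).norm
    refine Summable.of_norm_bounded (hf.mul_left K) fun n => ?_
    rw [norm_mul]
    exact mul_le_mul_of_nonneg_right (hK n) (norm_nonneg _)

lemma ncard_inter_Icc {T : Set ℕ} (hT : 0 ∉ T) (N : ℕ) :
    ((T ∩ Icc 1 N).ncard : ℝ) = ∑ i ∈ Finset.range (N + 1), T.indicator (1 : ℕ → ℝ) i := by
  have h : T ∩ Icc 1 N = ((Finset.range (N + 1)).filter (· ∈ T) : Finset ℕ) := by
    ext n
    simp only [mem_inter_iff, mem_Icc, Finset.coe_filter, Finset.mem_range, mem_ofPred_eq]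
    refine ⟨fun h => ⟨by omega, h.1⟩, fun h => ⟨h.2, ?_, by omega⟩⟩
    rcases Nat.eq_zero_or_pos n with rfl | hn
    · exact absurd h.2 hT
    · exact hn
  rw [h, Set.ncard_coe_finset, Finset.card_filter]
  push_cast
  refine Finset.sum_congr rfl fun i _ => ?_
  rw [indicator_apply]
  split_ifs <;> rfl

lemma tsum_mul_rpow_sub (T : Set ℕ) {s t : ℝ} (hs : 1 < s) (ht : 1 < t) :
    ∑' n : ℕ, T.indicator (1 : ℕ → ℝ) n * ((n : ℝ) ^ (-s) - (n : ℝ) ^ (-t)) =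
      primeSum T s - primeSum T t := by
  rw [primeSum, primeSum,
    ← (summable_indicator_rpow_neg T hs).tsum_sub (summable_indicator_rpow_neg T ht)]
  refine tsum_congr fun n => ?_
  by_cases hn : n ∈ T <;> simp [hn]

lemma summable_mul_rpow_sub (T : Set ℕ) {s t : ℝ} (hs : 1 < s) (ht : 1 < t) :
    Summable fun n : ℕ => T.indicator (1 : ℕ → ℝ) n * ((n : ℝ) ^ (-s) - (n : ℝ) ^ (-t)) := by
  refine ((summable_indicator_rpow_neg T hs).sub (summable_indicator_rpow_neg T ht)).congr
    fun n => ?_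
  by_cases hn : n ∈ T <;> simp [hn]

/-- `A` is a set of primes of natural density `θ` within the primes. -/
structure HasPrimeDensity (A : Set ℕ) (θ : ℝ) : Prop where
  subset : A ⊆ primeSet
  tendsto : Tendsto (fun N : ℕ => ((A ∩ Icc 1 N).ncard : ℝ) / ((primeSet ∩ Icc 1 N).ncard : ℝ))
    atTop (𝓝 θ)

namespace HasPrimeDensity

variable {A : Set ℕ} {θ : ℝ}

lemma eventually_abs_sum_sub_le (h : HasPrimeDensity A θ) {ε : ℝ} (hε : 0 < ε) :
    ∀ᶠ N in atTop,
      |∑ i ∈ Finset.range N, A.indicator (1 : ℕ → ℝ) i -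
        θ * ∑ i ∈ Finset.range N, primeSet.indicator (1 : ℕ → ℝ) i| ≤
      ε * ∑ i ∈ Finset.range N, primeSet.indicator (1 : ℕ → ℝ) i := by
  have h0 : 0 ∉ primeSet := Nat.not_prime_zero
  obtain ⟨N₁, hN₁⟩ := eventually_atTop.1 (Metric.tendsto_nhds.1 h.tendsto ε hε)
  filter_upwards [eventually_ge_atTop (max (N₁ + 1) 3)] with N hN
  obtain ⟨M, rfl⟩ : ∃ M, N = M + 1 := ⟨N - 1, by omega⟩
  have h1 := hN₁ M (by omega)
  rw [ncard_inter_Icc (fun h' => h0 (h.subset h')), ncard_inter_Icc h0, Real.dist_eq] at h1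
  set a := ∑ i ∈ Finset.range (M + 1), A.indicator (1 : ℕ → ℝ) i
  set p := ∑ i ∈ Finset.range (M + 1), primeSet.indicator (1 : ℕ → ℝ) i with hp
  have hp0 : 0 < p := by
    refine Finset.sum_pos' (fun i _ => indicator_nonneg (fun _ _ => zero_le_one) i)
      ⟨2, Finset.mem_range.2 (by omega), ?_⟩
    rw [indicator_of_mem (show 2 ∈ primeSet from Nat.prime_two)]
    exact one_pos
  have h2 : a - θ * p = (a / p - θ) * p := by field_simp
  rw [h2, abs_mul, abs_of_pos hp0]
  exact mul_le_mul_of_nonneg_right h1.le hp0.le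

/-- One-sided comparison of the sums over `A` and over all primes. -/
lemma eventually_lt_comparison {u v : ℝ} (hb : ∀ᶠ N in atTop, 0 ≤ ∑ i ∈ Finset.range N,
      (u * A.indicator (1 : ℕ → ℝ) i + v * primeSet.indicator (1 : ℕ → ℝ) i))
    {a b : ℝ} (ha : 0 < a) (hab : a < b) {c : ℝ} (hc : c < 0) :
    ∀ᶠ σ : ℝ in 𝓝[>] 0, c < u * (primeSum A (1 + a * σ) - primeSum A (1 + b * σ)) +
      v * (primeSum primeSet (1 + a * σ) - primeSum primeSet (1 + b * σ)) := by
  have hind (T : Set ℕ) (n : ℕ) : |T.indicator (1 : ℕ → ℝ) n| ≤ 1 := by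
    by_cases hn : n ∈ T <;> simp [hn]
  have hK (n : ℕ) : |u * A.indicator (1 : ℕ → ℝ) n + v * primeSet.indicator (1 : ℕ → ℝ) n| ≤
      |u| + |v| := by
    refine (abs_add_le _ _).trans ?_
    rw [abs_mul, abs_mul]
    exact add_le_add (mul_le_of_le_one_right (abs_nonneg _) (hind _ _))
      (mul_le_of_le_one_right (abs_nonneg _) (hind _ _))
  filter_upwards [eventually_lt_tsum_mul_rpow_sub hK hb ha hab hc,
    eventually_one_lt_one_add_mul ha, eventually_one_lt_one_add_mul (ha.trans hab)]
    with σ h1 hs ht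
  rw [← tsum_mul_rpow_sub A hs ht, ← tsum_mul_rpow_sub primeSet hs ht, ← tsum_mul_left,
    ← tsum_mul_left, ← ((summable_mul_rpow_sub A hs ht).mul_left u).tsum_add
      ((summable_mul_rpow_sub primeSet hs ht).mul_left v)]
  simpa only [add_mul, mul_assoc] using h1

lemma tendsto_primeSum_sub_of_lt (h : HasPrimeDensity A θ) {a b : ℝ} (ha : 0 < a) (hab : a < b) :
    Tendsto (fun σ => primeSum A (1 + a * σ) - primeSum A (1 + b * σ)) (𝓝[>] 0)
      (𝓝 (θ * Real.log (b / a))) := by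
  have hL : 0 < Real.log (b / a) := Real.log_pos ((one_lt_div ha).2 hab)
  have hP := tendsto_primeSum_primeSet_sub ha (ha.trans hab)
  set L := Real.log (b / a)
  have hsum (u v : ℝ) (N : ℕ) : ∑ i ∈ Finset.range N,
      (u * A.indicator (1 : ℕ → ℝ) i + v * primeSet.indicator (1 : ℕ → ℝ) i) =
      u * ∑ i ∈ Finset.range N, A.indicator (1 : ℕ → ℝ) i +
        v * ∑ i ∈ Finset.range N, primeSet.indicator (1 : ℕ → ℝ) i := by
    rw [Finset.sum_add_distrib, Finset.mul_sum, Finset.mul_sum]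
  rw [tendsto_order]
  refine ⟨fun c hc => ?_, fun c hc => ?_⟩
  · set ε := (θ * L - c) / (3 * L) with hε
    have hεL : ε * L * 3 = θ * L - c := by rw [hε]; field_simp
    have hε0 : 0 < ε := div_pos (by linarith) (by linarith)
    have hεL0 := mul_pos hε0 hL
    have h1 := eventually_lt_comparison (A := A) (u := 1) (v := -(θ - ε)) (c := -(ε * L))
      ((h.eventually_abs_sum_sub_le hε0).mono fun N hN => by
        rw [hsum]; linarith [(abs_le.1 hN).1]) ha hab (by linarith)
    filter_upwards [h1, (hP.const_mul (θ - ε)).eventually_const_lt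
      (show (θ - ε) * L - ε * L < (θ - ε) * L by linarith)] with σ h2 h3
    linarith
  · set ε := (c - θ * L) / (3 * L) with hε
    have hεL : ε * L * 3 = c - θ * L := by rw [hε]; field_simp
    have hε0 : 0 < ε := div_pos (by linarith) (by linarith)
    have hεL0 := mul_pos hε0 hL
    have h1 := eventually_lt_comparison (A := A) (u := -1) (v := θ + ε) (c := -(ε * L))
      ((h.eventually_abs_sum_sub_le hε0).mono fun N hN => by
        rw [hsum]; linarith [(abs_le.1 hN).2]) ha hab (by linarith)
    filter_upwards [h1, (hP.const_mul (θ + ε)).eventually_lt_const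
      (show (θ + ε) * L < (θ + ε) * L + ε * L by linarith)] with σ h2 h3
    linarith

lemma tendsto_primeSum_sub (h : HasPrimeDensity A θ) {a b : ℝ} (ha : 0 < a) (hb : 0 < b) :
    Tendsto (fun σ => primeSum A (1 + a * σ) - primeSum A (1 + b * σ)) (𝓝[>] 0)
      (𝓝 (θ * Real.log (b / a))) := by
  rcases lt_trichotomy a b with hab | rfl | hab
  · exact h.tendsto_primeSum_sub_of_lt ha hab
  · simp [ha.ne']
  · have h1 := (h.tendsto_primeSum_sub_of_lt hb hab).neg
    rw [← mul_neg, ← Real.log_inv, inv_div] at h1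
    simpa using h1

end HasPrimeDensity

lemma tendsto_one_div_log : Tendsto (fun N : ℕ => 1 / Real.log N) atTop (𝓝[>] 0) := by
  simp only [one_div]
  exact tendsto_inv_atTop_nhdsGT_zero.comp (Real.tendsto_log_atTop.comp tendsto_natCast_atTop_atTop)

lemma rpow_neg_mem_Icc (n : ℕ) {σ : ℝ} (hσ : 0 < σ) : (n : ℝ) ^ (-σ) ∈ Icc (0 : ℝ) 1 := by
  refine ⟨by positivity, ?_⟩
  rcases Nat.eq_zero_or_pos n with rfl | hn
  · rw [Nat.cast_zero, Real.zero_rpow (by linarith)]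
    exact zero_le_one
  · exact Real.rpow_le_one_of_one_le_of_nonpos (by exact_mod_cast hn) (by linarith)

lemma rpow_neg_one_div_log_mem_iff {n N : ℕ} (hn : 0 < n) (hN : 2 ≤ N) :
    (n : ℝ) ^ (-(1 / Real.log N)) ∈ Ici (Real.exp (-1)) ↔ n ≤ N := by
  have hn' : (0 : ℝ) < n := by exact_mod_cast hn
  have hN' : (1 : ℝ) < N := by exact_mod_cast hN
  rw [mem_Ici, Real.rpow_def_of_pos hn', Real.exp_le_exp, mul_neg, neg_le_neg_iff, mul_one_div,
    div_le_one (Real.log_pos hN'), Real.log_le_log_iff hn' (by linarith), Nat.cast_le]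

lemma exp_neg_one_lt_one : Real.exp (-1) < 1 := by simp

lemma continuous_one_div_max : Continuous fun y : ℝ => 1 / max y (Real.exp (-1)) :=
  continuous_const.div (by fun_prop) fun y => ((Real.exp_pos _).trans_le (le_max_right _ _)).ne'

lemma one_sub_min_pos (y : ℝ) : 0 < 1 - min y (Real.exp (-1)) :=
  sub_pos.2 ((min_le_right _ _).trans_lt exp_neg_one_lt_one)

lemma continuous_one_div_one_sub_min : Continuous fun y : ℝ => 1 / (1 - min y (Real.exp (-1))) :=
  continuous_const.div (by fun_prop) fun y => (one_sub_min_pos y).ne'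

lemma continuous_mertensCutoff :
    Continuous fun y : ℝ => 1 / max y (Real.exp (-1)) + 1 / (1 - min y (Real.exp (-1))) :=
  continuous_one_div_max.add continuous_one_div_one_sub_min

lemma one_div_max_nonneg (y : ℝ) : 0 ≤ 1 / max y (Real.exp (-1)) :=
  one_div_nonneg.2 ((Real.exp_pos _).le.trans (le_max_right _ _))

namespace HasPrimeDensity

variable {A : Set ℕ} {θ : ℝ}

lemma kfreeSeries_eq (h : HasPrimeDensity A θ) {k : ℕ} (hk : 2 ≤ k) {s : ℝ} (hs : 1 < s) :
    kfreeSeries k A s = Real.exp (primeSum A s +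
      remainderSum (fun y => ∑ e ∈ Finset.range k, y ^ e) A s) :=
  kfreeSeries_eq_exp hk h.subset hs.le (summable_indicator_rpow_neg _ hs)
    (summable_indicator_rpow_neg _ hs)

lemma tendsto_kfreeSeries_div (h : HasPrimeDensity A θ) {k : ℕ} (hk : 2 ≤ k) {a : ℝ}
    (ha : 0 < a) :
    Tendsto (fun σ => kfreeSeries k A (1 + a * σ) / kfreeSeries k A (1 + 1 * σ)) (𝓝[>] 0)
      (𝓝 (a ^ (-θ))) := by
  have hR {b : ℝ} (hb : 0 < b) :=
    tendsto_remainderSum_one_add_mul (isLocalFactor_geom_sum hk) h.subset hb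
  have h1 := ((h.tendsto_primeSum_sub ha one_pos).add ((hR ha).sub (hR one_pos))).rexp
  have h2 : a ^ (-θ) = Real.exp (θ * Real.log (1 / a) + (remainderSum (fun y =>
      ∑ e ∈ Finset.range k, y ^ e) A 1 - remainderSum (fun y =>
      ∑ e ∈ Finset.range k, y ^ e) A 1)) := by
    rw [Real.rpow_def_of_pos ha, sub_self, add_zero, one_div, Real.log_inv]
    ring_nf
  rw [h2]
  refine h1.congr' ?_
  filter_upwards [eventually_one_lt_one_add_mul ha, eventually_one_lt_one_add_mul one_pos]
    with σ hs ht
  rw [h.kfreeSeries_eq hk hs, h.kfreeSeries_eq hk ht, ← Real.exp_sub]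
  ring_nf

lemma momentsTendsto_kfree (h : HasPrimeDensity A θ) (hθ : 0 < θ) {k : ℕ} (hk : 2 ≤ k) :
    MomentsTendsto (𝓝[>] 0)
      (fun σ n => (kfreeSet k A).indicator (fun n : ℕ => (n : ℝ) ^ (-(1 + 1 * σ))) n /
        kfreeSeries k A (1 + 1 * σ))
      (fun σ n => (n : ℝ) ^ (-σ)) (gammaDensity θ) where
  weight_nonneg := by
    filter_upwards [eventually_one_lt_one_add_mul one_pos] with σ hs n
    rw [h.kfreeSeries_eq hk hs]
    exact div_nonneg (indicator_nonneg (fun n _ => by positivity) n) (Real.exp_pos _).le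
  point_mem := by
    filter_upwards [self_mem_nhdsWithin] with σ hσ n using rpow_neg_mem_Icc n hσ
  summable := by
    filter_upwards [eventually_one_lt_one_add_mul one_pos] with σ hs
    exact (summable_indicator_rpow_neg _ hs).div_const _
  density_nonneg u hu := gammaDensity_nonneg hθ hu
  integrable := integrableOn_gammaDensity hθ
  tendsto_moment j := by
    rw [integral_exp_neg_pow_mul_gammaDensity hθ]
    refine (h.tendsto_kfreeSeries_div hk (show (0 : ℝ) < j + 1 by positivity)).congr fun σ => ?_
    rw [kfreeSeries, ← tsum_div_const]
    refine tsum_congr fun n => ?_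
    by_cases hn : n ∈ kfreeSet k A
    · have hn0 : (0 : ℝ) < n := by exact_mod_cast hn.1
      rw [indicator_of_mem hn, indicator_of_mem hn, ← mul_div_assoc, ← Real.rpow_mul_natCast hn0.le,
        ← Real.rpow_add hn0]
      ring_nf
    · simp [hn]

lemma tendsto_sum_div_kfreeSeries (h : HasPrimeDensity A θ) (hθ : 0 < θ) {k : ℕ} (hk : 2 ≤ k) :
    Tendsto (fun N : ℕ => (∑ n ∈ Finset.Icc 1 N, (kfreeSet k A).indicator
        (fun n : ℕ => 1 / (n : ℝ)) n) / kfreeSeries k A (1 + 1 * (1 / Real.log N)))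
      atTop (𝓝 (1 / Real.Gamma (θ + 1))) := by
  have h1 := ((h.momentsTendsto_kfree hθ hk).tendsto_indicator continuous_one_div_max
    one_div_max_nonneg (Real.exp (-1))).comp tendsto_one_div_log
  rw [integral_cutoff_mul_gammaDensity hθ] at h1
  refine h1.congr' ?_
  filter_upwards [eventually_ge_atTop 2] with N hN
  have hN' : (1 : ℝ) < N := by exact_mod_cast hN
  have hσ : 0 < 1 / Real.log N := one_div_pos.2 (Real.log_pos hN')
  have hiff {n : ℕ} (hn : n ∈ kfreeSet k A) := rpow_neg_one_div_log_mem_iff hn.1 hN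
  simp only [Function.comp_apply]
  rw [tsum_eq_sum (s := Finset.Icc 1 N), Finset.sum_div]
  · refine Finset.sum_congr rfl fun n hnN => ?_
    by_cases hn : n ∈ kfreeSet k A
    · have hn0 : (0 : ℝ) < n := by exact_mod_cast hn.1
      have hx := (hiff hn).2 (Finset.mem_Icc.1 hnN).2
      rw [indicator_of_mem hn, indicator_of_mem hn, indicator_of_mem hx, max_eq_left hx,
        ← mul_div_assoc, neg_add, Real.rpow_add hn0, Real.rpow_neg_one, one_mul]
      have := (Real.rpow_pos_of_pos hn0 (-(1 / Real.log N))).ne'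
      field_simp
    · simp [hn]
  · intro n hnN
    by_cases hn : n ∈ kfreeSet k A
    · rw [indicator_of_notMem (mt (hiff hn).1 fun hle => hnN (Finset.mem_Icc.2 ⟨hn.1, hle⟩)),
        zero_mul]
    · simp [hn]

lemma summable_prime_weight (h : HasPrimeDensity A θ) {σ : ℝ} (hσ : 0 < σ) :
    Summable fun n : ℕ =>
      A.indicator (fun n : ℕ => (n : ℝ) ^ (-1 : ℝ) * ((n : ℝ) ^ (-σ) * (1 - (n : ℝ) ^ (-σ)))) n := by
  refine Summable.of_norm_bounded
    (Real.summable_nat_rpow.2 (by linarith : -(1 + σ) < -1)) fun n => ?_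
  by_cases hn : n ∈ A
  · have hn0 : (0 : ℝ) < n := by exact_mod_cast (h.subset hn : n.Prime).pos
    have hx := rpow_neg_mem_Icc n hσ
    rw [indicator_of_mem hn, Real.norm_of_nonneg (mul_nonneg (by positivity)
      (mul_nonneg hx.1 (sub_nonneg.2 hx.2))), ← mul_assoc, neg_add, Real.rpow_add hn0]
    exact mul_le_of_le_one_right (by positivity) (by linarith [hx.1])
  · rw [indicator_of_notMem hn, norm_zero]
    positivity

lemma momentsTendsto_prime (h : HasPrimeDensity A θ) (hθ : 0 < θ) :
    MomentsTendsto (𝓝[>] 0)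
      (fun (σ : ℝ) n => A.indicator
        (fun n : ℕ => (n : ℝ) ^ (-1 : ℝ) * ((n : ℝ) ^ (-σ) * (1 - (n : ℝ) ^ (-σ)))) n)
      (fun σ n => (n : ℝ) ^ (-σ)) (fun u => θ * frullaniDensity u) where
  weight_nonneg := by
    filter_upwards [self_mem_nhdsWithin] with σ hσ n
    refine indicator_nonneg (fun n _ => ?_) n
    have hx := rpow_neg_mem_Icc n hσ
    exact mul_nonneg (by positivity) (mul_nonneg hx.1 (sub_nonneg.2 hx.2))
  point_mem := by
    filter_upwards [self_mem_nhdsWithin] with σ hσ n using rpow_neg_mem_Icc n hσ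
  summable := by
    filter_upwards [self_mem_nhdsWithin] with σ hσ using h.summable_prime_weight hσ
  density_nonneg u hu := mul_nonneg hθ.le (frullaniDensity_nonneg hu)
  integrable := integrableOn_frullaniDensity.const_mul θ
  tendsto_moment j := by
    simp_rw [mul_left_comm _ θ]
    rw [integral_const_mul, integral_exp_neg_pow_mul_frullaniDensity]
    have h1 : (0 : ℝ) < j + 1 := by positivity
    have h2 : (0 : ℝ) < j + 2 := by positivity
    refine (h.tendsto_primeSum_sub h1 h2).congr' ?_
    filter_upwards [eventually_one_lt_one_add_mul h1, eventually_one_lt_one_add_mul h2]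
      with σ hs ht
    rw [primeSum, primeSum,
      ← (summable_indicator_rpow_neg A hs).tsum_sub (summable_indicator_rpow_neg A ht)]
    refine tsum_congr fun n => ?_
    by_cases hn : n ∈ A
    · have hn0 : (0 : ℝ) < n := by exact_mod_cast (h.subset hn : n.Prime).pos
      have hpow (m : ℕ) : (n : ℝ) ^ (-(1 + m * σ)) = (n : ℝ) ^ (-1 : ℝ) * ((n : ℝ) ^ (-σ)) ^ m := by
        rw [← Real.rpow_mul_natCast hn0.le, ← Real.rpow_add hn0]
        ring_nf
      have e1 := hpow (j + 1)
      have e2 := hpow (j + 2)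
      push_cast at e1 e2
      rw [indicator_of_mem hn, indicator_of_mem hn, indicator_of_mem hn, e1, e2]
      ring
    · simp [hn]

/-- Mertens' second theorem for `A`, with the constant compared to the Dirichlet series. -/
lemma tendsto_primeSum_inter_sub (h : HasPrimeDensity A θ) (hθ : 0 < θ) :
    Tendsto (fun N : ℕ => primeSum (A ∩ Iic N) 1 - primeSum A (1 + 1 * (1 / Real.log N)))
      atTop (𝓝 (θ * Real.eulerMascheroniConstant)) := by
  have hM := h.momentsTendsto_prime hθ
  have h1 := hM.tendsto_indicator continuous_mertensCutoff
    (fun y => add_nonneg (one_div_max_nonneg y) (one_div_pos.2 (one_sub_min_pos y)).le)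
    (Real.exp (-1))
  have h2 := (h1.sub (hM.tendsto_continuous continuous_one_div_one_sub_min)).comp
    tendsto_one_div_log
  simp_rw [mul_left_comm _ θ] at h2
  rw [integral_const_mul, integral_const_mul, ← mul_sub, integral_cutoff_mul_frullaniDensity] at h2
  refine h2.congr' ?_
  filter_upwards [eventually_ge_atTop 2] with N hN
  have hN' : (1 : ℝ) < N := by exact_mod_cast hN
  have hσ : 0 < 1 / Real.log N := one_div_pos.2 (Real.log_pos hN')
  have hx (n : ℕ) := rpow_neg_mem_Icc n hσ
  have hw (n : ℕ) : 0 ≤ A.indicator (fun n : ℕ => (n : ℝ) ^ (-1 : ℝ) *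
      ((n : ℝ) ^ (-(1 / Real.log N)) * (1 - (n : ℝ) ^ (-(1 / Real.log N))))) n :=
    indicator_nonneg (fun n _ => mul_nonneg (by positivity)
      (mul_nonneg (hx n).1 (sub_nonneg.2 (hx n).2))) n
  have hs := h.summable_prime_weight hσ
  obtain ⟨C, hC⟩ := exists_bound_of_continuous continuous_mertensCutoff
  obtain ⟨D, hD⟩ := exists_bound_of_continuous continuous_one_div_one_sub_min
  have hC' : ∀ y ∈ Icc (0 : ℝ) 1, |(Ici (Real.exp (-1))).indicator (fun y =>
      1 / max y (Real.exp (-1)) + 1 / (1 - min y (Real.exp (-1)))) y| ≤ C := fun y hy => by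
    rw [← Real.norm_eq_abs]
    exact (norm_indicator_le_norm_self _ _).trans (hC y hy)
  have hfin : Summable ((A ∩ Iic N).indicator fun n : ℕ => (n : ℝ) ^ (-1 : ℝ)) :=
    summable_of_hasFiniteSupport
      (((finite_Iic N).inter_of_right A).subset support_indicator_subset)
  simp only [Function.comp_apply]
  rw [← (summable_bounded_mul hw hx hs hC').tsum_sub (summable_bounded_mul hw hx hs hD), primeSum,
    primeSum, ← hfin.tsum_sub (summable_indicator_rpow_neg A (by linarith))]
  refine tsum_congr fun n => ?_
  by_cases hn : n ∈ A
  · have hp : n.Prime := h.subset hn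
    have hn0 : (0 : ℝ) < n := by exact_mod_cast hp.pos
    have hx0 := Real.rpow_pos_of_pos hn0 (-(1 / Real.log N))
    have hx1 : (n : ℝ) ^ (-(1 / Real.log N)) < 1 :=
      Real.rpow_lt_one_of_one_lt_of_neg (by exact_mod_cast hp.one_lt) (by linarith)
    have hadd : (n : ℝ) ^ (-(1 + 1 * (1 / Real.log N))) =
        (n : ℝ) ^ (-1 : ℝ) * (n : ℝ) ^ (-(1 / Real.log N)) := by
      rw [← Real.rpow_add hn0]
      ring_nf
    rw [indicator_of_mem hn, indicator_of_mem hn, hadd]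
    have hiff := rpow_neg_one_div_log_mem_iff hp.pos hN
    set x := (n : ℝ) ^ (-(1 / Real.log N))
    have hx1' : 1 - x ≠ 0 := by linarith
    by_cases hnN : n ≤ N
    · have hxm := hiff.2 hnN
      rw [indicator_of_mem hxm, indicator_of_mem (show n ∈ A ∩ Iic N from ⟨hn, hnN⟩),
        max_eq_left hxm]
      field_simp
      ring
    · have hxm := mt hiff.1 hnN
      rw [indicator_of_notMem hxm, indicator_of_notMem (show n ∉ A ∩ Iic N from fun h => hnN h.2),
        min_eq_left (not_le.1 hxm).le]
      field_simp
      ring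
  · simp [hn]

lemma tendsto_kfreeHarmSum_div_kfreeSeries (h : HasPrimeDensity A θ) (hθ : 0 < θ) {k : ℕ}
    (hk : 2 ≤ k) :
    Tendsto (fun N : ℕ => kfreeHarmSum k (fun p => p ≤ N ∧ p ∈ A) /
        kfreeSeries k A (1 + 1 * (1 / Real.log N)))
      atTop (𝓝 (Real.exp (θ * Real.eulerMascheroniConstant))) := by
  have hG := isLocalFactor_geom_sum hk
  have h1 := hG.tendsto_remainderSum (l := atTop) (T := fun N : ℕ => A ∩ Iic N) (s := fun _ => 1)
    (fun N => inter_subset_left.trans h.subset) h.subset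
    (fun n => (eventually_ge_atTop n).mono fun N hN => and_iff_left hN) tendsto_const_nhds
    (.of_forall fun _ => le_rfl)
  have h2 := ((h.tendsto_primeSum_inter_sub hθ).add (h1.sub
    ((tendsto_remainderSum_one_add_mul hG h.subset one_pos).comp tendsto_one_div_log))).rexp
  rw [sub_self, add_zero] at h2
  refine h2.congr' ?_
  filter_upwards [tendsto_one_div_log.eventually (eventually_one_lt_one_add_mul one_pos)]
    with N hs
  rw [kfreeHarmSum_eq_exp hk h.subset, h.kfreeSeries_eq hk hs, ← Real.exp_sub]
  simp only [Function.comp_apply]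
  ring_nf

end HasPrimeDensity

end

/-- **Generalized Mertens formula (Theorem 1, part (ii)).**
If `k ≥ 2` and `A` is a set of primes with natural density `θ ∈ (0,1]` within the primes,
then the ratio of the harmonic sum over `k`-free integers whose prime factors are `≤ N` and
lie in `A` to the harmonic sum over `k`-free integers `n ≤ N` whose prime factors lie in `A`
tends to `e^{γθ} Γ(θ+1)`. -/
theorem generalized_mertens_ii
    (k : ℕ) (hk : 2 ≤ k)
    (A : Set ℕ) (hA : ∀ p ∈ A, Nat.Prime p)
    (θ : ℝ) (hθ : θ ∈ Set.Ioc (0 : ℝ) 1)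
    (hdens : Tendsto
      (fun N : ℕ => ((A ∩ Set.Icc 1 N).ncard : ℝ) / (({p : ℕ | Nat.Prime p} ∩ Set.Icc 1 N).ncard : ℝ))
      atTop (nhds θ)) :
    Tendsto
      (fun N : ℕ =>
        kfreeHarmSum k (fun p => p ≤ N ∧ p ∈ A) /
        ∑ n ∈ Finset.Icc 1 N,
          if (∀ p : ℕ, p.Prime → p ∣ n → p ∈ A) ∧ KFree k n then (1 : ℝ) / (n : ℝ) else 0)
      atTop
      (nhds (Real.exp (Real.eulerMascheroniConstant * θ) * Real.Gamma (θ + 1))) := by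
  have h : HasPrimeDensity A θ := ⟨hA, hdens⟩
  have hΓ : Real.Gamma (θ + 1) ≠ 0 := (Real.Gamma_pos_of_pos (by linarith [hθ.1])).ne'
  have hlim := (h.tendsto_kfreeHarmSum_div_kfreeSeries hθ.1 hk).div
    (h.tendsto_sum_div_kfreeSeries hθ.1 hk) (one_div_ne_zero hΓ)
  rw [div_div_eq_mul_div, div_one, mul_comm θ] at hlim
  refine hlim.congr' ?_
  filter_upwards [tendsto_one_div_log.eventually (eventually_one_lt_one_add_mul one_pos)]
    with N hs
  have hF : kfreeSeries k A (1 + 1 * (1 / Real.log N)) ≠ 0 := by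
    rw [h.kfreeSeries_eq hk hs]
    exact Real.exp_ne_zero _
  simp only [Pi.div_apply]
  rw [div_div_div_cancel_right₀ hF]
  congr 1
  refine Finset.sum_congr rfl fun n hn => ?_
  have hn0 : 0 < n := (Finset.mem_Icc.1 hn).1
  simp only [Set.indicator_apply, kfreeSet, Set.mem_ofPred_eq, hn0, true_and]
end
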